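/- arXiv:1912.08758 — 10 statements merged into one kernel-verified Lean document; each statement's English description precedes it below -/
import Mathlib

section
/- One-step comparison of the relative and unrelativized value iterations: let J_0 = V_0 be continuous and strictly positive on S, let J_n be generated by the VI with constant Λ > 0 and V_n by the RVI with reference point x_0. Then for every n (assuming J_n, V_n are strictly positive), sup_{x∈S} V_{n+1}(x)/J_{n+1}(x) ≤ (Λ / V_n(x_0)) · sup_{x∈S} V_n(x)/J_n(x), and inf_{x∈S} V_{n+1}(x)/J_{n+1}(x) ≥ (Λ / V_n(x_0)) · inf_{x∈S} V_n(x)/J_n(x). -/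
open MeasureTheory Filter Topology

/-- **One-step comparison of the relative and unrelativized value iterations.**
`J` is generated by the value iteration (VI) with constant `Λ > 0`, and `V` by the
relative value iteration (RVI) with reference point `x₀`, both starting from the
same continuous strictly positive `J 0 = V 0`.  Then for every `n` (assuming the
iterates are strictly positive),
`sup_x V (n+1) x / J (n+1) x ≤ (Λ / V n x₀) * sup_x V n x / J n x` and
`inf_x V (n+1) x / J (n+1) x ≥ (Λ / V n x₀) * inf_x V n x / J n x`. -/
theorem rvi_vi_one_step_comparison
    {S U : Type*} [MetricSpace S] [CompactSpace S] [MeasurableSpace S] [BorelSpace S]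
    [MetricSpace U] [CompactSpace U] [Nonempty U]
    (γ : Measure S) [IsFiniteMeasure γ]
    (hγ : ∀ O : Set S, IsOpen O → O.Nonempty → 0 < γ O)
    (φ : S → U → S → ℝ)
    (hφc : Continuous fun q : S × U × S => φ q.1 q.2.1 q.2.2)
    (hφpos : ∀ x u y, 0 < φ x u y)
    (p : S → U → Measure S)
    (hp : ∀ x u, p x u = γ.withDensity fun y => ENNReal.ofReal (φ x u y))
    (hprob : ∀ x u, IsProbabilityMeasure (p x u))
    (k : S → U → ℝ) (hk : Continuous fun q : S × U => k q.1 q.2)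
    (Λ : ℝ) (hΛ : 0 < Λ) (x₀ : S)
    (J V : ℕ → S → ℝ)
    (hJ0c : Continuous (J 0)) (hJ0pos : ∀ x, 0 < J 0 x) (hJV0 : J 0 = V 0)
    (hJ : ∀ n x, J (n + 1) x = Λ⁻¹ * ⨅ u : U, Real.exp (k x u) * ∫ y, J n y ∂(p x u))
    (hV : ∀ n x, V (n + 1) x
        = (V n x₀)⁻¹ * ⨅ u : U, Real.exp (k x u) * ∫ y, V n y ∂(p x u))
    (hJpos : ∀ n x, 0 < J n x) (hVpos : ∀ n x, 0 < V n x) :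
    ∀ n : ℕ,
      (⨆ x : S, V (n + 1) x / J (n + 1) x) ≤ (Λ / V n x₀) * ⨆ x : S, V n x / J n x ∧
      (Λ / V n x₀) * (⨅ x : S, V n x / J n x) ≤ ⨅ x : S, V (n + 1) x / J (n + 1) x := by
  -- `V n` is a constant multiple of `J n`; the ratio is therefore constant in `x`.
  have step : ∀ n (c : ℝ), 0 < c → (∀ x, V n x = c * J n x) →
      ∀ x, V (n + 1) x = (Λ / V n x₀ * c) * J (n + 1) x := by
    intro n c hc h x
    have e : (⨅ u : U, Real.exp (k x u) * ∫ y, V n y ∂(p x u))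
        = c * ⨅ u : U, Real.exp (k x u) * ∫ y, J n y ∂(p x u) := by
      rw [Real.mul_iInf_of_nonneg hc.le]
      congr 1
      funext u
      have h2 : (∫ y, V n y ∂(p x u)) = c * ∫ y, J n y ∂(p x u) := by
        rw [← integral_const_mul]
        simp only [h]
      rw [h2]
      ring
    rw [hV, e, hJ]
    have := (hVpos n x₀).ne'
    field_simp
  have key : ∀ n, ∃ c : ℝ, 0 < c ∧ ∀ x, V n x = c * J n x := by
    intro n
    induction n with
    | zero => exact ⟨1, one_pos, fun x => by rw [hJV0, one_mul]⟩
    | succ n ih =>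
      obtain ⟨c, hc, h⟩ := ih
      exact ⟨_, mul_pos (div_pos hΛ (hVpos n x₀)) hc, step n c hc h⟩
  intro n
  obtain ⟨c, hc, h⟩ := key n
  have h' := step n c hc h
  haveI : Nonempty S := ⟨x₀⟩
  have r1 : (fun x => V n x / J n x) = fun _ => c := by
    funext x
    rw [h x, mul_div_cancel_right₀ _ (hJpos n x).ne']
  have r2 : (fun x => V (n + 1) x / J (n + 1) x) = fun _ => Λ / V n x₀ * c := by
    funext x
    rw [h' x, mul_div_cancel_right₀ _ (hJpos (n + 1) x).ne']
  rw [r1, r2, ciSup_const, ciInf_const, ciSup_const, ciInf_const]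
  exact ⟨le_rfl, le_rfl⟩
end

section
/- The oscillation of the ratio of the RVI to the VI iterates is nonincreasing: with J_0 = V_0 continuous and strictly positive, J_n generated by the VI with constant Λ > 0 and V_n by the RVI with reference point x_0, for every n one has 1 ≤ [sup_{x∈S} V_{n+1}(x)/J_{n+1}(x)] / [inf_{x∈S} V_{n+1}(x)/J_{n+1}(x)] ≤ [sup_{x∈S} V_n(x)/J_n(x)] / [inf_{x∈S} V_n(x)/J_n(x)]; consequently, since this ratio equals 1 at n = 0, for every n the function x ↦ V_n(x)/J_n(x) is constant on S. -/
open MeasureTheory Filter Topology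

lemma aux_cont {S U : Type*} [MetricSpace S] [CompactSpace S] [MeasurableSpace S] [BorelSpace S]
    [MetricSpace U] [CompactSpace U] [Nonempty U]
    (γ : Measure S) [IsFiniteMeasure γ]
    (φ : S → U → S → ℝ)
    (hφc : Continuous fun q : S × U × S => φ q.1 q.2.1 q.2.2)
    (hφpos : ∀ x u y, 0 < φ x u y)
    (p : S → U → Measure S)
    (hp : ∀ x u, p x u = γ.withDensity fun y => ENNReal.ofReal (φ x u y))
    (hprob : ∀ x u, IsProbabilityMeasure (p x u))
    (k : S → U → ℝ) (hk : Continuous fun q : S × U => k q.1 q.2)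
    (f : S → ℝ) (hf : Continuous f) (hpos : ∀ x, 0 < f x) :
    Continuous (fun x => ⨅ u : U, Real.exp (k x u) * ∫ y, f y ∂(p x u)) ∧
    ∀ x, 0 < ⨅ u : U, Real.exp (k x u) * ∫ y, f y ∂(p x u) := by
  have hint : ∀ x u, ∫ y, f y ∂(p x u) = ∫ y, φ x u y * f y ∂γ := by
    intro x u
    have hc : Continuous (φ x u) :=
      hφc.comp (continuous_const.prodMk (continuous_const.prodMk continuous_id))
    rw [hp, integral_withDensity_eq_integral_toReal_smul]
    · refine integral_congr_ae (Eventually.of_forall fun y => ?_)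
      simp [ENNReal.toReal_ofReal (hφpos x u y).le]
    · exact hc.measurable.ennreal_ofReal
    · exact Eventually.of_forall fun y => ENNReal.ofReal_lt_top
  have hG : Continuous fun q : S × U => Real.exp (k q.1 q.2) * ∫ y, f y ∂(p q.1 q.2) := by
    refine (Real.continuous_exp.comp hk).mul ?_
    simp_rw [hint]
    have h := continuous_parametric_integral_of_continuous (μ := γ)
      (f := fun (q : S × U) y => φ q.1 q.2 y * f y) (s := Set.univ) ?_ isCompact_univ
    · simpa using h
    · have h1 : Continuous fun z : (S × U) × S => φ z.1.1 z.1.2 z.2 :=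
        hφc.comp (f := fun z : (S × U) × S => (z.1.1, z.1.2, z.2)) (by fun_prop)
      exact h1.mul (hf.comp continuous_snd)
  have hGp : ∀ x u, 0 < Real.exp (k x u) * ∫ y, f y ∂(p x u) := by
    intro x u
    have := hprob x u
    refine mul_pos (Real.exp_pos _) ?_
    have hi : Integrable f (p x u) :=
      hf.integrable_of_hasCompactSupport (HasCompactSupport.of_compactSpace f)
    rw [integral_pos_iff_support_of_nonneg (fun y => (hpos y).le) hi]
    have : Function.support f = Set.univ := by
      ext y; simp [(hpos y).ne']
    simp [this]
  constructor
  · have h := isCompact_univ.continuous_sInf (K := (Set.univ : Set U))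
      (f := fun x u => Real.exp (k x u) * ∫ y, f y ∂(p x u)) hG
    simpa [Set.image_univ, sInf_range] using h
  · intro x
    have hc : Continuous fun u => Real.exp (k x u) * ∫ y, f y ∂(p x u) :=
      hG.comp (f := fun u : U => (x, u)) (by fun_prop)
    obtain ⟨u, -, hu, -⟩ := isCompact_univ.exists_sInf_image_eq_and_le
      (s := (Set.univ : Set U)) Set.univ_nonempty hc.continuousOn
    rw [Set.image_univ, sInf_range] at hu
    rw [hu]; exact hGp x u

/-- **The oscillation of the ratio of the RVI to the VI iterates is nonincreasing**,
and consequently the ratio `V n / J n` is constant on `S` for every `n`. -/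
theorem rvi_vi_ratio_oscillation_nonincreasing
    {S U : Type*} [MetricSpace S] [CompactSpace S] [MeasurableSpace S] [BorelSpace S]
    [MetricSpace U] [CompactSpace U] [Nonempty U]
    (γ : Measure S) [IsFiniteMeasure γ]
    (hγ : ∀ O : Set S, IsOpen O → O.Nonempty → 0 < γ O)
    (φ : S → U → S → ℝ)
    (hφc : Continuous fun q : S × U × S => φ q.1 q.2.1 q.2.2)
    (hφpos : ∀ x u y, 0 < φ x u y)
    (p : S → U → Measure S)
    (hp : ∀ x u, p x u = γ.withDensity fun y => ENNReal.ofReal (φ x u y))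
    (hprob : ∀ x u, IsProbabilityMeasure (p x u))
    (k : S → U → ℝ) (hk : Continuous fun q : S × U => k q.1 q.2)
    (Λ : ℝ) (hΛ : 0 < Λ) (x₀ : S)
    (J V : ℕ → S → ℝ)
    (hJ0c : Continuous (J 0)) (hJ0pos : ∀ x, 0 < J 0 x) (hJV0 : J 0 = V 0)
    (hJ : ∀ n x, J (n + 1) x = Λ⁻¹ * ⨅ u : U, Real.exp (k x u) * ∫ y, J n y ∂(p x u))
    (hV : ∀ n x, V (n + 1) x
        = (V n x₀)⁻¹ * ⨅ u : U, Real.exp (k x u) * ∫ y, V n y ∂(p x u)) :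
    (∀ n : ℕ,
      1 ≤ (⨆ x : S, V (n + 1) x / J (n + 1) x) / (⨅ x : S, V (n + 1) x / J (n + 1) x) ∧
      (⨆ x : S, V (n + 1) x / J (n + 1) x) / (⨅ x : S, V (n + 1) x / J (n + 1) x)
        ≤ (⨆ x : S, V n x / J n x) / (⨅ x : S, V n x / J n x)) ∧
    ∀ (n : ℕ) (x y : S), V n x / J n x = V n y / J n y := by
  have hJp : ∀ n, Continuous (J n) ∧ ∀ x, 0 < J n x := by
    intro n
    induction n with
    | zero => exact ⟨hJ0c, hJ0pos⟩
    | succ n ih =>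
      obtain ⟨h1, h2⟩ := aux_cont γ φ hφc hφpos p hp hprob k hk (J n) ih.1 ih.2
      refine ⟨?_, fun x => ?_⟩
      · rw [funext (hJ n)]
        exact continuous_const.mul h1
      · rw [hJ]
        exact mul_pos (inv_pos.2 hΛ) (h2 x)
  have hc : ∀ n, ∃ c : ℝ, 0 < c ∧ ∀ x, V n x = c * J n x := by
    intro n
    induction n with
    | zero => exact ⟨1, one_pos, fun x => by rw [hJV0, one_mul]⟩
    | succ n ih =>
      obtain ⟨c, hc, h⟩ := ih
      refine ⟨(V n x₀)⁻¹ * c * Λ, ?_, fun x => ?_⟩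
      · rw [h]
        have := (hJp n).2 x₀
        positivity
      · rw [hV, hJ]
        have : ∀ u, Real.exp (k x u) * ∫ y, V n y ∂(p x u)
            = c * (Real.exp (k x u) * ∫ y, J n y ∂(p x u)) := by
          intro u
          simp_rw [h]
          rw [integral_const_mul]; ring
        simp_rw [this]
        rw [← Real.mul_iInf_of_nonneg hc.le]
        field_simp
  have hr : ∀ n, ∃ c : ℝ, 0 < c ∧ ∀ x, V n x / J n x = c := by
    intro n
    obtain ⟨c, hc, h⟩ := hc n
    exact ⟨c, hc, fun x => by rw [h, mul_div_cancel_right₀ _ ((hJp n).2 x).ne']⟩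
  have : Nonempty S := ⟨x₀⟩
  have hone : ∀ n, (⨆ x : S, V n x / J n x) / (⨅ x : S, V n x / J n x) = 1 := by
    intro n
    obtain ⟨c, hc, h⟩ := hr n
    simp_rw [h]
    rw [ciSup_const, ciInf_const, div_self hc.ne']
  refine ⟨fun n => ⟨(hone _).ge, by rw [hone, hone]⟩, fun n x y => ?_⟩
  obtain ⟨c, -, h⟩ := hr n
  rw [h, h]
end

section
/- Proportionality of the RVI and VI iterates: with J_0 = V_0 continuous and strictly positive, J_n generated by the VI with constant Λ > 0 and V_n by the RVI with reference point x_0, for every n ≥ 0 and every x ∈ S one has V_n(x) = C_n · J_n(x), where C_0 = 1 and C_n = ∏_{m=0}^{n-1} Λ / V_m(x_0). -/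
open MeasureTheory Filter Topology

/-- **Proportionality of the RVI and VI iterates:**
`V n x = C n * J n x` with `C n = ∏_{m<n} Λ / V m x₀`. -/
theorem rvi_vi_proportionality
    {S U : Type*} [MetricSpace S] [CompactSpace S] [MeasurableSpace S] [BorelSpace S]
    [MetricSpace U] [CompactSpace U] [Nonempty U]
    (γ : Measure S) [IsFiniteMeasure γ]
    (hγ : ∀ O : Set S, IsOpen O → O.Nonempty → 0 < γ O)
    (φ : S → U → S → ℝ)
    (hφc : Continuous fun q : S × U × S => φ q.1 q.2.1 q.2.2)
    (hφpos : ∀ x u y, 0 < φ x u y)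
    (p : S → U → Measure S)
    (hp : ∀ x u, p x u = γ.withDensity fun y => ENNReal.ofReal (φ x u y))
    (hprob : ∀ x u, IsProbabilityMeasure (p x u))
    (k : S → U → ℝ) (hk : Continuous fun q : S × U => k q.1 q.2)
    (Λ : ℝ) (hΛ : 0 < Λ) (x₀ : S)
    (J V : ℕ → S → ℝ)
    (hJ0c : Continuous (J 0)) (hJ0pos : ∀ x, 0 < J 0 x) (hJV0 : J 0 = V 0)
    (hJ : ∀ n x, J (n + 1) x = Λ⁻¹ * ⨅ u : U, Real.exp (k x u) * ∫ y, J n y ∂(p x u))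
    (hV : ∀ n x, V (n + 1) x
        = (V n x₀)⁻¹ * ⨅ u : U, Real.exp (k x u) * ∫ y, V n y ∂(p x u)) :
    ∀ (n : ℕ) (x : S), V n x = (∏ m ∈ Finset.range n, Λ / V m x₀) * J n x := by
  have hVnn : ∀ n x, 0 ≤ V n x := by
    intro n
    induction n with
    | zero => intro x; rw [← hJV0]; exact (hJ0pos x).le
    | succ n ih =>
      intro x
      rw [hV]
      exact mul_nonneg (inv_nonneg.mpr (ih x₀)) (Real.iInf_nonneg fun u =>
        mul_nonneg (Real.exp_pos _).le (integral_nonneg fun y => ih y))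
  intro n
  induction n with
  | zero => intro x; simp [hJV0]
  | succ n ih =>
    intro x
    have hC : 0 ≤ ∏ m ∈ Finset.range n, Λ / V m x₀ :=
      Finset.prod_nonneg fun m _ => div_nonneg hΛ.le (hVnn m x₀)
    have key : (⨅ u : U, Real.exp (k x u) * ∫ y, V n y ∂(p x u))
        = (∏ m ∈ Finset.range n, Λ / V m x₀)
          * ⨅ u : U, Real.exp (k x u) * ∫ y, J n y ∂(p x u) := by
      rw [Real.mul_iInf_of_nonneg hC]
      congr 1
      funext u
      rw [integral_congr_ae (Filter.Eventually.of_forall fun y => ih y), integral_const_mul]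
      ring
    rw [hV, key, hJ, Finset.prod_range_succ, div_eq_mul_inv Λ (V n x₀)]
    have h : Λ * Λ⁻¹ = 1 := mul_inv_cancel₀ hΛ.ne'
    generalize (⨅ u : U, Real.exp (k x u) * ∫ y, J n y ∂(p x u)) = I
    generalize (∏ m ∈ Finset.range n, Λ / V m x₀) = C
    linear_combination (-(V n x₀)⁻¹ * C * I) * h
end

section
/- Explicit relation between the RVI and VI iterates: with J_0 = V_0 continuous and strictly positive, J_n generated by the VI with constant Λ > 0 and V_n by the RVI with reference point x_0, for every n ≥ 0 and every x ∈ S one has V_{n+1}(x) = Λ · J_{n+1}(x) / J_n(x_0); in particular V_{n+1}(x_0)/J_{n+1}(x_0) = Λ / J_n(x_0). -/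
open MeasureTheory Filter Topology

theorem aux_F_cont
    {S U : Type*} [MetricSpace S] [CompactSpace S] [MeasurableSpace S] [BorelSpace S]
    [MetricSpace U] [CompactSpace U]
    (γ : Measure S) [IsFiniteMeasure γ]
    (φ : S → U → S → ℝ)
    (hφc : Continuous fun q : S × U × S => φ q.1 q.2.1 q.2.2)
    (hφpos : ∀ x u y, 0 < φ x u y)
    (p : S → U → Measure S)
    (hp : ∀ x u, p x u = γ.withDensity fun y => ENNReal.ofReal (φ x u y))
    (k : S → U → ℝ) (hk : Continuous fun q : S × U => k q.1 q.2)
    (f : S → ℝ) (hf : Continuous f) :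
    Continuous fun q : S × U => Real.exp (k q.1 q.2) * ∫ y, f y ∂(p q.1 q.2) := by
  have h1 : ∀ x u, ∫ y, f y ∂(p x u) = ∫ y in Set.univ, φ x u y * f y ∂γ := by
    intro x u
    have hm : Measurable fun y => φ x u y :=
      (hφc.comp (by fun_prop : Continuous fun y : S => (x, u, y))).measurable
    rw [hp, integral_withDensity_eq_integral_toReal_smul (by fun_prop) (by simp)]
    simp [ENNReal.toReal_ofReal (hφpos x u _).le]
  simp_rw [h1]
  refine (Real.continuous_exp.comp hk).mul ?_
  refine continuous_parametric_integral_of_continuous (μ := γ)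
    (f := fun (q : S × U) y => φ q.1 q.2 y * f y) ?_ isCompact_univ
  have : Continuous fun q : (S × U) × S => φ q.1.1 q.1.2 q.2 :=
    hφc.comp (by fun_prop : Continuous fun q : (S × U) × S => (q.1.1, q.1.2, q.2))
  exact this.mul (hf.comp continuous_snd)

/-- **Explicit relation between the RVI and VI iterates:**
`V (n+1) x = Λ * J (n+1) x / J n x₀`; in particular
`V (n+1) x₀ / J (n+1) x₀ = Λ / J n x₀`. -/
theorem rvi_vi_explicit_relation
    {S U : Type*} [MetricSpace S] [CompactSpace S] [MeasurableSpace S] [BorelSpace S]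
    [MetricSpace U] [CompactSpace U] [Nonempty U]
    (γ : Measure S) [IsFiniteMeasure γ]
    (hγ : ∀ O : Set S, IsOpen O → O.Nonempty → 0 < γ O)
    (φ : S → U → S → ℝ)
    (hφc : Continuous fun q : S × U × S => φ q.1 q.2.1 q.2.2)
    (hφpos : ∀ x u y, 0 < φ x u y)
    (p : S → U → Measure S)
    (hp : ∀ x u, p x u = γ.withDensity fun y => ENNReal.ofReal (φ x u y))
    (hprob : ∀ x u, IsProbabilityMeasure (p x u))
    (k : S → U → ℝ) (hk : Continuous fun q : S × U => k q.1 q.2)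
    (Λ : ℝ) (hΛ : 0 < Λ) (x₀ : S)
    (J V : ℕ → S → ℝ)
    (hJ0c : Continuous (J 0)) (hJ0pos : ∀ x, 0 < J 0 x) (hJV0 : J 0 = V 0)
    (hJ : ∀ n x, J (n + 1) x = Λ⁻¹ * ⨅ u : U, Real.exp (k x u) * ∫ y, J n y ∂(p x u))
    (hV : ∀ n x, V (n + 1) x
        = (V n x₀)⁻¹ * ⨅ u : U, Real.exp (k x u) * ∫ y, V n y ∂(p x u)) :
    (∀ (n : ℕ) (x : S), V (n + 1) x = Λ * J (n + 1) x / J n x₀) ∧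
    ∀ n : ℕ, V (n + 1) x₀ / J (n + 1) x₀ = Λ / J n x₀ := by
  have key : ∀ n, Continuous (J n) ∧ ∀ x, 0 < J n x := by
    intro n
    induction n with
    | zero => exact ⟨hJ0c, hJ0pos⟩
    | succ n ih =>
      obtain ⟨hc, hpos⟩ := ih
      have hF := aux_F_cont γ φ hφc hφpos p hp k hk (J n) hc
      constructor
      · have : J (n + 1) = fun x => Λ⁻¹ * sInf ((fun u =>
            Real.exp (k x u) * ∫ y, J n y ∂(p x u)) '' Set.univ) := by
          funext x
          rw [hJ, Set.image_univ, sInf_range]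
        rw [this]
        exact continuous_const.mul (isCompact_univ.continuous_sInf hF)
      · intro x
        rw [hJ]
        refine mul_pos (inv_pos.2 hΛ) ?_
        have hFx : Continuous fun u : U => Real.exp (k x u) * ∫ y, J n y ∂(p x u) :=
          hF.comp (by fun_prop : Continuous fun u : U => (x, u))
        obtain ⟨u, -, hu⟩ := isCompact_univ.exists_isMinOn Set.univ_nonempty hFx.continuousOn
        have hle : Real.exp (k x u) * ∫ y, J n y ∂(p x u) ≤
            ⨅ u : U, Real.exp (k x u) * ∫ y, J n y ∂(p x u) :=
          le_ciInf fun v => hu (Set.mem_univ v)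
        refine lt_of_lt_of_le (mul_pos (Real.exp_pos _) ?_) hle
        haveI := hprob x u
        have hint : Integrable (J n) (p x u) :=
          integrableOn_univ.1 (hc.continuousOn.integrableOn_compact isCompact_univ)
        rw [integral_pos_iff_support_of_nonneg (fun y => (hpos y).le) hint]
        have : Function.support (J n) = Set.univ := by
          ext y
          simp [(hpos y).ne']
        simp [this]
  have step : ∀ n (c : ℝ), 0 < c → (∀ x, V n x = c * J n x) →
      ∀ x, V (n + 1) x = Λ * J (n + 1) x / J n x₀ := by
    intro n c hc h x
    have h0 := ((key n).2 x₀).ne'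
    have : (⨅ u : U, Real.exp (k x u) * ∫ y, V n y ∂(p x u)) =
        c * ⨅ u : U, Real.exp (k x u) * ∫ y, J n y ∂(p x u) := by
      rw [Real.mul_iInf_of_nonneg hc.le]
      congr 1
      funext u
      simp_rw [h]
      rw [integral_const_mul]
      ring
    rw [hV, this, hJ, h]
    field_simp
  have prop : ∀ n, ∃ c : ℝ, 0 < c ∧ ∀ x, V n x = c * J n x := by
    intro n
    induction n with
    | zero => exact ⟨1, one_pos, fun x => by rw [hJV0, one_mul]⟩
    | succ n ih =>
      obtain ⟨c, hc, h⟩ := ih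
      refine ⟨Λ / J n x₀, div_pos hΛ ((key n).2 x₀), fun x => ?_⟩
      rw [step n c hc h x]
      ring
  have main : ∀ (n : ℕ) (x : S), V (n + 1) x = Λ * J (n + 1) x / J n x₀ := by
    intro n x
    obtain ⟨c, hc, h⟩ := prop n
    exact step n c hc h x
  refine ⟨main, fun n => ?_⟩
  have h0 := ((key n).2 x₀).ne'
  have h1 := ((key (n + 1)).2 x₀).ne'
  rw [main]
  field_simp
end

section
/- A Markov chain with a uniformly positive transition probability into a set visits it infinitely often: let (S, 𝒮) be a measurable space, κ a Markov kernel from S to S, ν a probability measure on S, and let (X_n)_{n≥0} denote the coordinate process on S^ℕ under the Ionescu–Tulcea measure P_ν of the time-homogeneous Markov chain with initial law ν and transition kernel κ. If A ∈ 𝒮 and ε > 0 satisfy κ(x)(A) ≥ ε for every x ∈ S, then P_ν-almost surely, liminf_{n→∞} (1/n) ∑_{m=0}^{n-1} 1_A(X_{m+1}) ≥ ε; in particular, P_ν-almost surely the set {n : X_n ∈ A} is infinite. -/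
open MeasureTheory Filter Topology

/-- Number of visits to `A` at times `1, …, n`. -/
noncomputable def visitCount {S : Type*} (A : Set S) (n : ℕ) (ω : ℕ → S) : ℝ :=
  ∑ m ∈ Finset.range n, A.indicator (fun _ => (1 : ℝ)) (ω (m + 1))

/-- The same count as a function of the first `n + 1` coordinates. -/
noncomputable def visitCountFin {S : Type*} (A : Set S) (n : ℕ) (x : Fin (n + 1) → S) : ℝ :=
  ∑ m : Fin n, A.indicator (fun _ => (1 : ℝ)) (x m.succ)

lemma visitCount_eq_fin {S : Type*} (A : Set S) (n : ℕ) (ω : ℕ → S) :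
    visitCount A n ω = visitCountFin A n (fun i : Fin (n + 1) => ω i) := by
  simp [visitCount, visitCountFin, Finset.sum_range]

lemma visitCount_nonneg {S : Type*} (A : Set S) (n : ℕ) (ω : ℕ → S) : 0 ≤ visitCount A n ω :=
  Finset.sum_nonneg fun _ _ => Set.indicator_nonneg (fun _ _ => zero_le_one) _

lemma visitCount_le {S : Type*} (A : Set S) (n : ℕ) (ω : ℕ → S) : visitCount A n ω ≤ n := by
  have h : visitCount A n ω ≤ ∑ m ∈ Finset.range n, (1 : ℝ) :=
    Finset.sum_le_sum fun m _ => Set.indicator_le_self' (fun _ _ => zero_le_one) _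
  simpa using h

lemma measurable_visitCountFin {S : Type*} [MeasurableSpace S] {A : Set S} (hA : MeasurableSet A)
    (n : ℕ) : Measurable (visitCountFin A n) := by
  unfold visitCountFin
  exact Finset.measurable_sum _ fun m _ =>
    (measurable_const.indicator hA).comp (measurable_pi_apply _)

lemma measurable_visitCount {S : Type*} [MeasurableSpace S] {A : Set S} (hA : MeasurableSet A)
    (n : ℕ) : Measurable (visitCount A n) := by
  unfold visitCount
  exact Finset.measurable_sum _ fun m _ =>
    (measurable_const.indicator hA).comp (measurable_pi_apply _)

lemma exp_step {S : Type*} [MeasurableSpace S]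
    (P : Measure (ℕ → S)) [IsProbabilityMeasure P]
    (A : Set S) (hA : MeasurableSet A) (ε : ℝ) (hε : 0 < ε) (n : ℕ)
    (h : ∀ C : Set (Fin (n + 1) → S), MeasurableSet C →
        ENNReal.ofReal ε * P {ω | (fun i : Fin (n + 1) => ω i) ∈ C} ≤
        P {ω | (fun i : Fin (n + 1) => ω i) ∈ C ∧ ω (n + 1) ∈ A})
    (l : ℝ) (hl : 0 < l) :
    ∫ ω, Real.exp (-l * visitCount A (n + 1) ω) ∂P
      ≤ Real.exp (-ε * (1 - Real.exp (-l))) * ∫ ω, Real.exp (-l * visitCount A n ω) ∂P := by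
  have hInteg : ∀ k, Integrable (fun ω => Real.exp (-l * visitCount A k ω)) P := by
    intro k
    refine Integrable.of_bound
      ((measurable_visitCount hA k).const_mul _).exp.aestronglyMeasurable 1 ?_
    refine Eventually.of_forall fun ω => ?_
    rw [Real.norm_eq_abs, abs_of_pos (Real.exp_pos _), Real.exp_le_one_iff]
    nlinarith [visitCount_nonneg A k ω]
  have hr : Measurable (fun (ω : ℕ → S) (i : Fin (n + 1)) => ω i) := by fun_prop
  have hD : MeasurableSet {ω : ℕ → S | ω (n + 1) ∈ A} := measurable_pi_apply (n + 1) hA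
  have hle : ENNReal.ofReal ε • P.map (fun (ω : ℕ → S) (i : Fin (n + 1)) => ω i) ≤
      (P.restrict {ω : ℕ → S | ω (n + 1) ∈ A}).map (fun ω (i : Fin (n + 1)) => ω i) := by
    refine Measure.le_iff.2 fun C hC => ?_
    rw [Measure.smul_apply, Measure.map_apply hr hC, Measure.map_apply hr hC,
      Measure.restrict_apply (hr hC)]
    exact h C hC
  have hFm : Measurable (fun x => Real.exp (-l * visitCountFin A n x)) :=
    ((measurable_visitCountFin hA n).const_mul _).exp
  have key : ε * ∫ ω, Real.exp (-l * visitCount A n ω) ∂P ≤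
      ∫ ω in {ω : ℕ → S | ω (n + 1) ∈ A}, Real.exp (-l * visitCount A n ω) ∂P := by
    have := integral_mono_measure (f := fun x => Real.exp (-l * visitCountFin A n x)) hle
      (Eventually.of_forall fun x => (Real.exp_pos _).le) (by
        rw [integrable_map_measure hFm.aestronglyMeasurable hr.aemeasurable]
        have := (hInteg n).restrict (s := {ω : ℕ → S | ω (n + 1) ∈ A})
        simpa only [visitCount_eq_fin, Function.comp_def] using this)
    rw [integral_smul_measure, integral_map hr.aemeasurable hFm.aestronglyMeasurable,
      integral_map hr.aemeasurable hFm.aestronglyMeasurable, ENNReal.toReal_ofReal hε.le] at this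
    simpa only [visitCount_eq_fin, smul_eq_mul] using this
  have heq : ∫ ω, Real.exp (-l * visitCount A (n + 1) ω) ∂P =
      ∫ ω, Real.exp (-l * visitCount A n ω) ∂P - (1 - Real.exp (-l)) *
      ∫ ω in {ω : ℕ → S | ω (n + 1) ∈ A}, Real.exp (-l * visitCount A n ω) ∂P := by
    rw [← integral_indicator hD, ← integral_const_mul, ← integral_sub (hInteg n)
      (((hInteg n).indicator hD).const_mul _)]
    congr 1
    ext ω
    have hs : visitCount A (n + 1) ω =
        visitCount A n ω + A.indicator (fun _ => (1 : ℝ)) (ω (n + 1)) := by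
      simp [visitCount, Finset.sum_range_succ]
    by_cases hω : ω (n + 1) ∈ A
    · rw [hs, Set.indicator_of_mem hω, Set.indicator_of_mem (by exact hω), mul_add, Real.exp_add]
      ring_nf
    · rw [hs, Set.indicator_of_notMem hω, Set.indicator_of_notMem (by exact hω)]
      simp
  have h0 : 0 ≤ ∫ ω, Real.exp (-l * visitCount A n ω) ∂P :=
    integral_nonneg fun ω => (Real.exp_pos _).le
  have h1 : Real.exp (-l) ≤ 1 := Real.exp_le_one_iff.2 (by linarith)
  have h2 := Real.add_one_le_exp (-ε * (1 - Real.exp (-l)))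
  rw [heq]
  nlinarith [mul_le_mul_of_nonneg_left key (sub_nonneg.2 h1), mul_le_mul_of_nonneg_right h2 h0]

lemma ae_eventually_count {S : Type*} [MeasurableSpace S]
    (P : Measure (ℕ → S)) [IsProbabilityMeasure P]
    (A : Set S) (hA : MeasurableSet A) (ε : ℝ) (hε : 0 < ε)
    (h : ∀ n, ∀ C : Set (Fin (n + 1) → S), MeasurableSet C →
        ENNReal.ofReal ε * P {ω | (fun i : Fin (n + 1) => ω i) ∈ C} ≤
        P {ω | (fun i : Fin (n + 1) => ω i) ∈ C ∧ ω (n + 1) ∈ A})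
    (δ : ℝ) (hδ : 0 < δ) :
    ∀ᵐ ω ∂P, ∀ᶠ n : ℕ in atTop, (ε - δ) * n < visitCount A n ω := by
  set l := δ / ε with hldef
  have hl : 0 < l := div_pos hδ hε
  set q := -ε * (1 - Real.exp (-l)) + l * (ε - δ) with hq
  have hq0 : q < 0 := by
    have h1 : Real.exp (-l) ≤ 1 / (1 + l) := by
      rw [Real.exp_neg, inv_eq_one_div]
      exact one_div_le_one_div_of_le (by linarith) (by linarith [Real.add_one_le_exp l])
    have h2 : δ = l * ε := by rw [hldef]; field_simp
    have h3 : 1 - 1 / (1 + l) = l / (1 + l) := by field_simp; ring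
    have h4 : ε * (l / (1 + l)) ≤ ε * (1 - Real.exp (-l)) := by
      apply mul_le_mul_of_nonneg_left _ hε.le
      linarith
    have h5 : l * (ε - l * ε) < ε * (l / (1 + l)) := by
      have : ε * (l / (1 + l)) - l * (ε - l * ε) = ε * l ^ 3 / (1 + l) := by field_simp; ring
      have : 0 < ε * l ^ 3 / (1 + l) := by positivity
      linarith
    rw [hq, h2]
    linarith
  have hE : ∀ n : ℕ, ∫ ω, Real.exp (-l * visitCount A n ω) ∂P
      ≤ Real.exp (-ε * (1 - Real.exp (-l))) ^ n := by
    intro n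
    induction n with
    | zero => simp [visitCount]
    | succ n ih =>
      refine (exp_step P A hA ε hε n (h n) l hl).trans ?_
      rw [pow_succ']
      exact mul_le_mul_of_nonneg_left ih (Real.exp_pos _).le
  have hP : ∀ n : ℕ, P {ω | visitCount A n ω ≤ (ε - δ) * n} ≤ ENNReal.ofReal (Real.exp q ^ n) := by
    intro n
    have hInteg : Integrable (fun ω => Real.exp (-l * visitCount A n ω)) P := by
      refine Integrable.of_bound
        ((measurable_visitCount hA n).const_mul _).exp.aestronglyMeasurable 1 ?_
      refine Eventually.of_forall fun ω => ?_
      rw [Real.norm_eq_abs, abs_of_pos (Real.exp_pos _), Real.exp_le_one_iff]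
      nlinarith [visitCount_nonneg A n ω]
    have hm := mul_meas_ge_le_integral_of_nonneg (μ := P)
      (f := fun ω => Real.exp (-l * visitCount A n ω))
      (Eventually.of_forall fun ω => (Real.exp_pos _).le) hInteg (Real.exp (-l * ((ε - δ) * n)))
    have hset : {ω : ℕ → S | Real.exp (-l * ((ε - δ) * n)) ≤ Real.exp (-l * visitCount A n ω)}
        = {ω | visitCount A n ω ≤ (ε - δ) * n} := by
      ext ω
      simp only [Set.mem_ofPred_eq, Real.exp_le_exp, neg_mul, neg_le_neg_iff]
      exact mul_le_mul_iff_right₀ hl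
    rw [hset] at hm
    rw [← ofReal_measureReal]
    apply ENNReal.ofReal_le_ofReal
    have h6 := hm.trans (hE n)
    have h7 : Real.exp q ^ n =
        Real.exp (l * ((ε - δ) * n)) * Real.exp (-ε * (1 - Real.exp (-l))) ^ n := by
      rw [← Real.exp_nat_mul, ← Real.exp_nat_mul, ← Real.exp_add, hq]
      ring_nf
    have h8 : Real.exp (l * ((ε - δ) * n)) * Real.exp (-l * ((ε - δ) * n)) = 1 := by
      rw [← Real.exp_add]; simp
    rw [h7]
    calc _ = Real.exp (l * ((ε - δ) * n)) * (Real.exp (-l * ((ε - δ) * n)) *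
          P.real {ω | visitCount A n ω ≤ (ε - δ) * n}) := by rw [← mul_assoc, h8, one_mul]
      _ ≤ _ := mul_le_mul_of_nonneg_left h6 (Real.exp_pos _).le
  have hsum : Summable (fun n : ℕ => Real.exp q ^ n) :=
    summable_geometric_of_lt_one (Real.exp_pos _).le (Real.exp_lt_one_iff.2 hq0)
  have hfin : ∑' n : ℕ, P {ω | visitCount A n ω ≤ (ε - δ) * n} ≠ ⊤ :=
    ne_top_of_le_ne_top hsum.tsum_ofReal_ne_top (ENNReal.tsum_le_tsum hP)
  filter_upwards [ae_eventually_notMem hfin] with ω hω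
  filter_upwards [hω] with n hn
  simpa using hn

/-- **A Markov chain with a uniformly positive transition probability into a set
visits it infinitely often.**  Here `P` is the (Ionescu–Tulcea) law on the path
space `ℕ → S` of the time-homogeneous Markov chain with initial law `ν` and
one-step transition kernel `κ`, characterized by the initial condition `hinit`
and the Markov property `hMarkov`.  If `κ x A ≥ ε > 0` for all `x`, then
`P`-a.s. `liminf (1/n) ∑_{m<n} 1_A(X_{m+1}) ≥ ε`, and in particular the set of
times at which the chain lies in `A` is a.s. infinite. -/
theorem markov_chain_visits_infinitely_often
    {S : Type*} [MeasurableSpace S]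
    (κ : ProbabilityTheory.Kernel S S) [ProbabilityTheory.IsMarkovKernel κ]
    (ν : Measure S) [IsProbabilityMeasure ν]
    (P : Measure (ℕ → S)) [IsProbabilityMeasure P]
    (hinit : ∀ B : Set S, MeasurableSet B → P {ω | ω 0 ∈ B} = ν B)
    (hMarkov : ∀ (n : ℕ) (B : Set S), MeasurableSet B →
      ∀ C : Set (Fin (n + 1) → S), MeasurableSet C →
        P {ω | (fun i : Fin (n + 1) => ω i) ∈ C ∧ ω (n + 1) ∈ B}
          = ∫⁻ ω in {ω | (fun i : Fin (n + 1) => ω i) ∈ C}, κ (ω n) B ∂P)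
    (A : Set S) (hA : MeasurableSet A) (ε : ℝ) (hε : 0 < ε)
    (hκA : ∀ x : S, ENNReal.ofReal ε ≤ κ x A) :
    ∀ᵐ ω ∂P,
      ε ≤ Filter.liminf
          (fun n : ℕ =>
            (∑ m ∈ Finset.range n, A.indicator (fun _ => (1 : ℝ)) (ω (m + 1))) / n)
          Filter.atTop ∧
      {n : ℕ | ω n ∈ A}.Infinite := by
  have h : ∀ n, ∀ C : Set (Fin (n + 1) → S), MeasurableSet C →
        ENNReal.ofReal ε * P {ω | (fun i : Fin (n + 1) => ω i) ∈ C} ≤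
        P {ω | (fun i : Fin (n + 1) => ω i) ∈ C ∧ ω (n + 1) ∈ A} := by
    intro n C hC
    rw [hMarkov n A hA C hC, ← setLIntegral_const]
    exact lintegral_mono fun ω => hκA _
  have hae : ∀ᵐ ω ∂P, ∀ k : ℕ, ∀ᶠ n : ℕ in atTop,
      (ε - 1 / ((k : ℝ) + 1)) * n < visitCount A n ω :=
    ae_all_iff.2 fun k => ae_eventually_count P A hA ε hε h _ (by positivity)
  filter_upwards [hae] with ω hω
  have hlim : ε ≤ Filter.liminf (fun n : ℕ => visitCount A n ω / n) Filter.atTop := by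
    refine le_of_forall_pos_lt_add fun δ hδ => ?_
    obtain ⟨k, hk⟩ := exists_nat_one_div_lt hδ
    have : ε - 1 / ((k : ℝ) + 1) ≤
        Filter.liminf (fun n : ℕ => visitCount A n ω / n) Filter.atTop := by
      refine le_liminf_of_le ?_ ?_
      · refine IsBoundedUnder.isCoboundedUnder_ge ?_
        refine isBoundedUnder_of ⟨1, fun n => ?_⟩
        exact div_le_one_of_le₀ (visitCount_le A n ω) (Nat.cast_nonneg n)
      · filter_upwards [hω k, eventually_gt_atTop 0] with n hn hn0
        rw [le_div_iff₀ (by exact_mod_cast hn0)]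
        exact hn.le
    linarith
  refine ⟨hlim, fun hfin => ?_⟩
  have hb : ∀ n, visitCount A n ω ≤ hfin.toFinset.card := by
    intro n
    classical
    have : visitCount A n ω = (((Finset.range n).filter (fun m => ω (m + 1) ∈ A)).card : ℝ) := by
      simp [visitCount, Set.indicator_apply]
    rw [this]
    norm_cast
    refine Finset.card_le_card_of_injOn (fun m => m + 1) ?_ ?_
    · intro m hm
      simp at hm ⊢
      exact hm.2
    · intro a _ b _ hab
      simpa using hab
  have ht : Tendsto (fun n : ℕ => visitCount A n ω / n) atTop (𝓝 0) :=
    squeeze_zero (fun n => div_nonneg (visitCount_nonneg A n ω) (Nat.cast_nonneg n))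
      (fun n => div_le_div_of_nonneg_right (hb n) (Nat.cast_nonneg n))
      (tendsto_const_div_atTop_nhds_zero_nat _)
  rw [ht.liminf_eq] at hlim
  linarith
end

section
/- A uniform limit of the RVI solves the normalized DP equation: let V_n be generated by the RVI with reference point x_0 from a continuous strictly positive V_0, and suppose V_n converges uniformly on S to a continuous strictly positive function V̄. Then V̄ satisfies V̄(x_0) · V̄(x) = inf_{u∈U} [ e^{k(x,u)} ∫_S V̄(y) p(dy|x,u) ] for every x ∈ S; that is, V̄ solves the DP equation with Λ = V̄(x_0). -/
open MeasureTheory Filter Topology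

theorem rvi_aux_cont
    {S U : Type*} [MetricSpace S] [CompactSpace S] [MeasurableSpace S] [BorelSpace S]
    [MetricSpace U] [CompactSpace U]
    (γ : Measure S) [IsFiniteMeasure γ]
    (φ : S → U → S → ℝ)
    (hφc : Continuous fun q : S × U × S => φ q.1 q.2.1 q.2.2)
    (hφpos : ∀ x u y, 0 < φ x u y)
    (p : S → U → Measure S)
    (hp : ∀ x u, p x u = γ.withDensity fun y => ENNReal.ofReal (φ x u y))
    (k : S → U → ℝ) (hk : Continuous fun q : S × U => k q.1 q.2)
    (W : S → ℝ) (hW : Continuous W) :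
    Continuous fun q : S × U => Real.exp (k q.1 q.2) * ∫ y, W y ∂(p q.1 q.2) := by
  have h1 : ∀ x u, ∫ y, W y ∂(p x u) = ∫ y, φ x u y * W y ∂γ := by
    intro x u
    have hm : Continuous (φ x u) :=
      hφc.comp (by fun_prop : Continuous fun y : S => (x, u, y))
    rw [hp, integral_withDensity_eq_integral_toReal_smul]
    · simp [ENNReal.toReal_ofReal (hφpos x u _).le]
    · exact hm.measurable.ennreal_ofReal
    · simp
  simp only [h1]
  refine (Real.continuous_exp.comp hk).mul ?_
  have h2 : Continuous (Function.uncurry fun (q : S × U) (y : S) => φ q.1 q.2 y * W y) := by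
    refine Continuous.mul ?_ (hW.comp continuous_snd)
    exact hφc.comp (by fun_prop : Continuous fun r : (S × U) × S => (r.1.1, r.1.2, r.2))
  have := continuous_parametric_integral_of_continuous (μ := γ) h2 isCompact_univ
  simpa using this

/-- **A uniform limit of the RVI solves the normalized DP equation:** if the RVI
iterates `V n` converge uniformly on `S` to a continuous strictly positive
`V̄`, then `V̄(x₀)·V̄(x) = inf_u [e^{k(x,u)} ∫ V̄ dp(·|x,u)]` for all `x`;
i.e. `V̄` solves the DP equation with `Λ = V̄(x₀)`. -/
theorem rvi_uniform_limit_solves_dp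
    {S U : Type*} [MetricSpace S] [CompactSpace S] [MeasurableSpace S] [BorelSpace S]
    [MetricSpace U] [CompactSpace U] [Nonempty U]
    (γ : Measure S) [IsFiniteMeasure γ]
    (hγ : ∀ O : Set S, IsOpen O → O.Nonempty → 0 < γ O)
    (φ : S → U → S → ℝ)
    (hφc : Continuous fun q : S × U × S => φ q.1 q.2.1 q.2.2)
    (hφpos : ∀ x u y, 0 < φ x u y)
    (p : S → U → Measure S)
    (hp : ∀ x u, p x u = γ.withDensity fun y => ENNReal.ofReal (φ x u y))
    (hprob : ∀ x u, IsProbabilityMeasure (p x u))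
    (k : S → U → ℝ) (hk : Continuous fun q : S × U => k q.1 q.2)
    (x₀ : S)
    (V : ℕ → S → ℝ)
    (hV0c : Continuous (V 0)) (hV0pos : ∀ x, 0 < V 0 x)
    (hV : ∀ n x, V (n + 1) x
        = (V n x₀)⁻¹ * ⨅ u : U, Real.exp (k x u) * ∫ y, V n y ∂(p x u))
    (Vbar : S → ℝ) (hVbarc : Continuous Vbar) (hVbarpos : ∀ x, 0 < Vbar x)
    (hunif : TendstoUniformly (fun n => V n) Vbar Filter.atTop) :
    ∀ x : S, Vbar x₀ * Vbar x
      = ⨅ u : U, Real.exp (k x u) * ∫ y, Vbar y ∂(p x u) := by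
  have hVc : ∀ n, Continuous (V n) := by
    intro n
    induction n with
    | zero => exact hV0c
    | succ n ih =>
      have hc := rvi_aux_cont γ φ hφc hφpos p hp k hk (V n) ih
      have h3 : Continuous fun x => ⨅ u : U, Real.exp (k x u) * ∫ y, V n y ∂(p x u) := by
        have := IsCompact.continuous_sInf (K := (Set.univ : Set U)) isCompact_univ
          (f := fun x u => Real.exp (k x u) * ∫ y, V n y ∂(p x u)) hc
        simpa [Set.image_univ, sInf_range] using this
      have h4 : V (n + 1) = fun x => (V n x₀)⁻¹ *
          ⨅ u : U, Real.exp (k x u) * ∫ y, V n y ∂(p x u) := funext (hV n)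
      rw [h4]
      exact continuous_const.mul h3
  intro x
  have hint : ∀ W : S → ℝ, Continuous W → ∀ u, Integrable W (p x u) := by
    intro W hW u
    have := hprob x u
    exact hW.integrable_of_hasCompactSupport (HasCompactSupport.of_compactSpace W)
  have hbdd : ∀ W : S → ℝ, Continuous W →
      BddBelow (Set.range fun u : U => Real.exp (k x u) * ∫ y, W y ∂(p x u)) := by
    intro W hW
    have hc := (rvi_aux_cont γ φ hφc hφpos p hp k hk W hW).comp
      (by fun_prop : Continuous fun u : U => (x, u))
    exact (isCompact_range hc).bddBelow
  obtain ⟨M, hM⟩ : ∃ M, ∀ u, Real.exp (k x u) ≤ M := by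
    have hc : Continuous fun u : U => Real.exp (k x u) := Real.continuous_exp.comp
      (hk.comp (by fun_prop : Continuous fun u : U => (x, u)))
    obtain ⟨M, hM⟩ := (isCompact_range hc).bddAbove
    exact ⟨M, fun u => hM ⟨u, rfl⟩⟩
  have hMpos : 0 < M := (Real.exp_pos _).trans_le (hM (Classical.arbitrary U))
  -- one-sided comparison
  have key : ∀ W W' : S → ℝ, Continuous W → Continuous W' → ∀ δ : ℝ, 0 ≤ δ →
      (∀ y, W y ≤ W' y + δ) →
      (⨅ u : U, Real.exp (k x u) * ∫ y, W y ∂(p x u))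
        ≤ (⨅ u : U, Real.exp (k x u) * ∫ y, W' y ∂(p x u)) + M * δ := by
    intro W W' hW hW' δ hδ h
    rw [← sub_le_iff_le_add]
    refine le_ciInf fun u => ?_
    rw [sub_le_iff_le_add]
    refine (ciInf_le (hbdd W hW) u).trans ?_
    have := hprob x u
    have h5 : ∫ y, W y ∂(p x u) ≤ ∫ y, W' y ∂(p x u) + δ := by
      calc ∫ y, W y ∂(p x u) ≤ ∫ y, (W' y + δ) ∂(p x u) :=
            integral_mono (hint W hW u) ((hint W' hW' u).add (integrable_const δ)) h
        _ = _ := by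
            rw [integral_add (hint W' hW' u) (integrable_const δ)]
            simp
    calc _ ≤ Real.exp (k x u) * (∫ y, W' y ∂(p x u) + δ) :=
          mul_le_mul_of_nonneg_left h5 (Real.exp_pos _).le
      _ = Real.exp (k x u) * ∫ y, W' y ∂(p x u) + Real.exp (k x u) * δ := by ring
      _ ≤ _ := by
          have := mul_le_mul_of_nonneg_right (hM u) hδ
          linarith
  have hlim : Tendsto (fun n => ⨅ u : U, Real.exp (k x u) * ∫ y, V n y ∂(p x u)) atTop
      (𝓝 (⨅ u : U, Real.exp (k x u) * ∫ y, Vbar y ∂(p x u))) := by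
    rw [Metric.tendsto_nhds]
    intro ε hε
    have hδ : 0 < ε / (2 * M) := by positivity
    filter_upwards [Metric.tendstoUniformly_iff.1 hunif _ hδ] with n hn
    have hn' : ∀ y, |Vbar y - V n y| < ε / (2 * M) := fun y => by
      simpa [Real.dist_eq] using hn y
    have hMδ : M * (ε / (2 * M)) = ε / 2 := by field_simp
    have ha := key (V n) Vbar (hVc n) hVbarc _ hδ.le
      (fun y => by linarith [(abs_lt.1 (hn' y)).1])
    have hb := key Vbar (V n) hVbarc (hVc n) _ hδ.le
      (fun y => by linarith [(abs_lt.1 (hn' y)).2])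
    rw [hMδ] at ha hb
    rw [Real.dist_eq, abs_lt]
    constructor <;> linarith
  have hx0 := hunif.tendsto_at x₀
  have hx := (hunif.tendsto_at x).comp (tendsto_add_atTop_nat 1)
  have hprod := hx0.mul hx
  refine tendsto_nhds_unique (hprod.congr' ?_) hlim
  filter_upwards [hx0.eventually_ne (hVbarpos x₀).ne'] with n hn
  simp only [Function.comp, hV n x]
  rw [mul_inv_cancel_left₀ hn]
end

section
/- Convergence of the value iteration and relative value iteration (main discrete-time theorem): suppose Λ > 0 and a continuous strictly positive V : S → (0,∞) solve the DP equation. Let J_0 = V_0 be continuous and strictly positive, let J_n be generated by the VI with constant Λ and V_n by the RVI with reference point x_0. Then there exists a constant c > 0 such that J_n(x) → c·V(x) as n → ∞ for γ-almost every x ∈ S, and V_n(x) → V̄(x) as n → ∞ for γ-almost every x ∈ S, where V̄ := (Λ / V(x_0))·V is the solution of the DP equation normalized by V̄(x_0) = Λ. -/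
open MeasureTheory Filter Topology

lemma aux_cont_int {X S : Type*} [TopologicalSpace X] [FirstCountableTopology X] [LocallyCompactSpace X]
    [MetricSpace S] [CompactSpace S]
    [MeasurableSpace S] [BorelSpace S] (γ : Measure S) [IsFiniteMeasure γ]
    (g : X → S → ℝ) (hg : Continuous (Function.uncurry g)) :
    Continuous fun x => ∫ y, g x y ∂γ := by
  have := continuous_parametric_integral_of_continuous (μ := γ) hg (isCompact_univ (X := S))
  simpa using this

lemma aux_integrable {S : Type*} [MetricSpace S] [CompactSpace S]
    [MeasurableSpace S] [BorelSpace S] (γ : Measure S) [IsFiniteMeasure γ]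
    (f : S → ℝ) (hf : Continuous f) : Integrable f γ := by
  have := hf.continuousOn.integrableOn_compact (μ := γ) (isCompact_univ (X := S))
  simpa using this

lemma aux_bdd {U : Type*} [TopologicalSpace U] [CompactSpace U] (f : U → ℝ)
    (hf : Continuous f) : BddBelow (Set.range f) := by
  simpa using (isCompact_univ (X := U)).bddBelow_image hf.continuousOn

section
variable {S U : Type*} [MetricSpace S] [CompactSpace S] [MeasurableSpace S] [BorelSpace S]
    [MetricSpace U] [CompactSpace U] [Nonempty U]
    (γ : Measure S) [IsFiniteMeasure γ] (a : S → U → S → ℝ)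

/-- The DP operator with combined kernel. -/
noncomputable def auxT (f : S → ℝ) (x : S) : ℝ := ⨅ u : U, ∫ y, a x u y * f y ∂γ

lemma auxT_cont (ha : Continuous fun q : S × U × S => a q.1 q.2.1 q.2.2)
    (f : S → ℝ) (hf : Continuous f) : Continuous (auxT γ a f) := by
  have h1 : Continuous fun q : S × U => ∫ y, a q.1 q.2 y * f y ∂γ := by
    apply aux_cont_int γ (fun (q : S × U) y => a q.1 q.2 y * f y)
    have : Continuous fun q : (S × U) × S => a q.1.1 q.1.2 q.2 :=
      ha.comp (by fun_prop : Continuous fun q : (S × U) × S => (q.1.1, q.1.2, q.2))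
    exact this.mul (hf.comp continuous_snd)
  have h2 := IsCompact.continuous_sInf (f := fun (x : S) (u : U) => ∫ y, a x u y * f y ∂γ)
    (isCompact_univ (X := U)) h1
  simp only [Set.image_univ] at h2
  exact h2

lemma aux_cont_y (ha : Continuous fun q : S × U × S => a q.1 q.2.1 q.2.2) (x : S) (u : U) :
    Continuous fun y => a x u y :=
  ha.comp (by fun_prop : Continuous fun y : S => (x, u, y))

lemma aux_cont_u (ha : Continuous fun q : S × U × S => a q.1 q.2.1 q.2.2)
    (f : S → ℝ) (hf : Continuous f) (x : S) : Continuous fun u => ∫ y, a x u y * f y ∂γ := by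
  apply aux_cont_int γ (fun (u : U) y => a x u y * f y)
  have : Continuous fun q : U × S => a x q.1 q.2 :=
    ha.comp (by fun_prop : Continuous fun q : U × S => (x, q.1, q.2))
  exact this.mul (hf.comp continuous_snd)

lemma auxT_smul (c : ℝ) (hc : 0 ≤ c) (f : S → ℝ) (x : S) :
    auxT γ a (fun y => c * f y) x = c * auxT γ a f x := by
  unfold auxT
  rw [Real.mul_iInf_of_nonneg hc]
  congr 1; ext u
  rw [← integral_const_mul]
  congr 1; ext y; ring

/-- If `f ≤ g` then `T f + ε ∫ (g - f) ≤ T g`. -/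
lemma auxT_gap (ha : Continuous fun q : S × U × S => a q.1 q.2.1 q.2.2)
    (ε : ℝ) (hε : ∀ x u y, ε ≤ a x u y) (f g : S → ℝ) (hf : Continuous f) (hg : Continuous g)
    (hfg : ∀ y, f y ≤ g y) (x : S) :
    auxT γ a f x + ε * ∫ y, (g y - f y) ∂γ ≤ auxT γ a g x := by
  unfold auxT
  apply le_ciInf
  intro u
  have hay := aux_cont_y a ha x u
  have h1 : ⨅ u : U, ∫ y, a x u y * f y ∂γ ≤ ∫ y, a x u y * f y ∂γ :=
    ciInf_le (aux_bdd _ (aux_cont_u γ a ha f hf x)) u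
  have h2 : ∫ y, ε * (g y - f y) ∂γ ≤ ∫ y, (a x u y * g y - a x u y * f y) ∂γ := by
    apply integral_mono
    · exact aux_integrable γ _ (by fun_prop)
    · exact aux_integrable γ _ (by fun_prop)
    · intro y
      have := mul_le_mul_of_nonneg_right (hε x u y) (sub_nonneg.2 (hfg y))
      simp only
      linarith
  rw [integral_sub (aux_integrable γ _ (by fun_prop)) (aux_integrable γ _ (by fun_prop)),
    integral_const_mul] at h2
  linarith

lemma aux_step (ha : Continuous fun q : S × U × S => a q.1 q.2.1 q.2.2)
    (ε : ℝ) (hε0 : 0 < ε) (hε : ∀ x u y, ε ≤ a x u y) (Λ : ℝ) (hΛ : 0 < Λ)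
    (V : S → ℝ) (hV : Continuous V) (B : ℝ) (hB0 : 0 < B) (hB : ∀ x, V x ≤ B)
    (hDP : ∀ x, Λ * V x = auxT γ a V x)
    (f : S → ℝ) (hf : Continuous f) (m M : ℝ) (hm : 0 ≤ m) (hM : 0 ≤ M)
    (h1 : ∀ x, m * V x ≤ f x) (h2 : ∀ x, f x ≤ M * V x) :
    ∃ m' M' : ℝ, m ≤ m' ∧ M' ≤ M ∧
      M' - m' = (1 - ε / (Λ * B) * ∫ y, V y ∂γ) * (M - m) ∧
      (∀ x, m' * V x ≤ Λ⁻¹ * auxT γ a f x) ∧ (∀ x, Λ⁻¹ * auxT γ a f x ≤ M' * V x) := by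
  have i1 : 0 ≤ ∫ y, (f y - m * V y) ∂γ := integral_nonneg fun y => sub_nonneg.2 (h1 y)
  have i2 : 0 ≤ ∫ y, (M * V y - f y) ∂γ := integral_nonneg fun y => sub_nonneg.2 (h2 y)
  have hd : 0 < ε / (Λ * B) := by positivity
  refine ⟨m + ε / (Λ * B) * ∫ y, (f y - m * V y) ∂γ, M - ε / (Λ * B) * ∫ y, (M * V y - f y) ∂γ,
    ?_, ?_, ?_, ?_, ?_⟩
  · linarith [mul_nonneg hd.le i1]
  · linarith [mul_nonneg hd.le i2]
  · rw [integral_sub (aux_integrable γ _ hf) (aux_integrable γ _ (by fun_prop)),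
      integral_sub (aux_integrable γ _ (by fun_prop)) (aux_integrable γ _ hf),
      integral_const_mul, integral_const_mul]
    ring
  · intro x
    have := auxT_gap γ a ha ε hε (fun y => m * V y) f (by fun_prop) hf h1 x
    rw [auxT_smul γ a m hm, ← hDP] at this
    rw [le_inv_mul_iff₀ hΛ]
    have e : Λ * ((ε / (Λ * B) * ∫ y, (f y - m * V y) ∂γ) * V x)
        ≤ ε * ∫ y, (f y - m * V y) ∂γ := by
      have : Λ * ((ε / (Λ * B) * ∫ y, (f y - m * V y) ∂γ) * V x)
        = (ε * ∫ y, (f y - m * V y) ∂γ) * (V x / B) := by field_simp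
      rw [this]
      exact mul_le_of_le_one_right (by positivity) ((div_le_one hB0).2 (hB x))
    linarith
  · intro x
    have := auxT_gap γ a ha ε hε f (fun y => M * V y) hf (by fun_prop) h2 x
    rw [auxT_smul γ a M hM, ← hDP] at this
    rw [inv_mul_le_iff₀ hΛ]
    have e : Λ * ((ε / (Λ * B) * ∫ y, (M * V y - f y) ∂γ) * V x)
        ≤ ε * ∫ y, (M * V y - f y) ∂γ := by
      have : Λ * ((ε / (Λ * B) * ∫ y, (M * V y - f y) ∂γ) * V x)
        = (ε * ∫ y, (M * V y - f y) ∂γ) * (V x / B) := by field_simp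
      rw [this]
      exact mul_le_of_le_one_right (by positivity) ((div_le_one hB0).2 (hB x))
    linarith

lemma aux_conv (ha : Continuous fun q : S × U × S => a q.1 q.2.1 q.2.2)
    (ε : ℝ) (hε0 : 0 < ε) (hε : ∀ x u y, ε ≤ a x u y) (Λ : ℝ) (hΛ : 0 < Λ) (x₀ : S)
    (V : S → ℝ) (hV : Continuous V) (hVpos : ∀ x, 0 < V x) (hVI : 0 < ∫ y, V y ∂γ)
    (hDP : ∀ x, Λ * V x = auxT γ a V x)
    (J : ℕ → S → ℝ) (hJ0c : Continuous (J 0)) (hJ0pos : ∀ x, 0 < J 0 x)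
    (hJ : ∀ n x, J (n + 1) x = Λ⁻¹ * auxT γ a (J n) x) :
    ∃ c : ℝ, 0 < c ∧ (∀ n x, 0 < J n x) ∧
      ∀ x, Tendsto (fun n => J n x) atTop (𝓝 (c * V x)) := by
  have : Nonempty S := ⟨x₀⟩
  have hJc : ∀ n, Continuous (J n) := by
    intro n
    induction n with
    | zero => exact hJ0c
    | succ n ih =>
      rw [funext (hJ n)]
      exact (auxT_cont γ a ha _ ih).const_mul _
  obtain ⟨xB, -, hxB⟩ := (isCompact_univ (X := S)).exists_isMaxOn Set.univ_nonempty hV.continuousOn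
  have hB : ∀ x, V x ≤ V xB := fun x => hxB (Set.mem_univ x)
  have hQ : Continuous fun x => J 0 x / V x := hJ0c.div hV fun x => (hVpos x).ne'
  obtain ⟨x1, -, hx1⟩ := (isCompact_univ (X := S)).exists_isMinOn Set.univ_nonempty hQ.continuousOn
  obtain ⟨x2, -, hx2⟩ := (isCompact_univ (X := S)).exists_isMaxOn Set.univ_nonempty hQ.continuousOn
  have hm0 : 0 < J 0 x1 / V x1 := div_pos (hJ0pos _) (hVpos _)
  have h01 : ∀ x, J 0 x1 / V x1 * V x ≤ J 0 x := fun x =>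
    (le_div_iff₀ (hVpos x)).1 (hx1 (Set.mem_univ x))
  have h02 : ∀ x, J 0 x ≤ J 0 x2 / V x2 * V x := fun x =>
    (div_le_iff₀ (hVpos x)).1 (hx2 (Set.mem_univ x))
  set r : ℝ := 1 - ε / (Λ * V xB) * ∫ y, V y ∂γ with hr
  have hr1 : r < 1 := by
    have := hVpos xB
    have : 0 < ε / (Λ * V xB) * ∫ y, V y ∂γ := by positivity
    linarith
  -- sequence of brackets
  let P : ℕ → ℝ × ℝ → Prop := fun n q =>
    0 < q.1 ∧ (∀ x, q.1 * V x ≤ J n x) ∧ (∀ x, J n x ≤ q.2 * V x)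
  have hPle : ∀ n q, P n q → q.1 ≤ q.2 := fun n q h =>
    le_of_mul_le_mul_right ((h.2.1 x₀).trans (h.2.2 x₀)) (hVpos x₀)
  have hstep : ∀ n q, P n q → ∃ q' : ℝ × ℝ, P (n + 1) q' ∧ q.1 ≤ q'.1 ∧ q'.2 ≤ q.2 ∧
      q'.2 - q'.1 = r * (q.2 - q.1) := by
    intro n q h
    obtain ⟨m', M', e1, e2, e3, e4, e5⟩ := aux_step γ a ha ε hε0 hε Λ hΛ V hV (V xB) (hVpos _) hB hDP
      (J n) (hJc n) q.1 q.2 h.1.le (h.1.le.trans (hPle n q h)) h.2.1 h.2.2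
    refine ⟨(m', M'), ⟨h.1.trans_le e1, ?_, ?_⟩, e1, e2, e3⟩
    · intro x; rw [hJ]; exact e4 x
    · intro x; rw [hJ]; exact e5 x
  choose! F hF1 hF2 hF4 hF3 using hstep
  let q : ℕ → ℝ × ℝ := fun n => Nat.rec (J 0 x1 / V x1, J 0 x2 / V x2) (fun n q => F n q) n
  have hq : ∀ n, P n (q n) := by
    intro n
    induction n with
    | zero => exact ⟨hm0, h01, h02⟩
    | succ n ih => exact hF1 n _ ih
  have hmono : Monotone fun n => (q n).1 := monotone_nat_of_le_succ fun n => hF2 n _ (hq n)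
  have hd : ∀ n, (q n).2 - (q n).1 ≤ (max r 0) ^ n * ((q 0).2 - (q 0).1) := by
    intro n
    induction n with
    | zero => simp
    | succ n ih =>
      have e : (q (n+1)).2 - (q (n+1)).1 = r * ((q n).2 - (q n).1) := hF3 n _ (hq n)
      have h0 : 0 ≤ (q n).2 - (q n).1 := sub_nonneg.2 (hPle n _ (hq n))
      rw [e, pow_succ']
      calc r * ((q n).2 - (q n).1) ≤ max r 0 * ((q n).2 - (q n).1) :=
            mul_le_mul_of_nonneg_right (le_max_left _ _) h0
        _ ≤ max r 0 * ((max r 0) ^ n * ((q 0).2 - (q 0).1)) :=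
            mul_le_mul_of_nonneg_left ih (le_max_right _ _)
        _ = _ := by ring
  have hpow : Tendsto (fun n => (max r 0) ^ n * ((q 0).2 - (q 0).1)) atTop (𝓝 0) := by
    simpa using (tendsto_pow_atTop_nhds_zero_of_lt_one (le_max_right r 0)
      (max_lt hr1 one_pos)).mul_const ((q 0).2 - (q 0).1)
  have hdt : Tendsto (fun n => (q n).2 - (q n).1) atTop (𝓝 0) :=
    squeeze_zero (fun n => sub_nonneg.2 (hPle n _ (hq n))) hd hpow
  have hbdd : BddAbove (Set.range fun n => (q n).1) := by
    have hanti : Antitone fun n => (q n).2 := antitone_nat_of_succ_le fun n => hF4 n _ (hq n)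
    refine ⟨(q 0).2, ?_⟩
    rintro _ ⟨n, rfl⟩
    exact (hPle n _ (hq n)).trans (hanti (Nat.zero_le n))
  have hc := tendsto_atTop_ciSup hmono hbdd
  set c := ⨆ n, (q n).1
  have hM : Tendsto (fun n => (q n).2) atTop (𝓝 c) := by
    have := hc.add hdt
    simpa using this
  refine ⟨c, (hq 0).1.trans_le (le_ciSup hbdd 0), fun n x =>
    (mul_pos (hq n).1 (hVpos x)).trans_le ((hq n).2.1 x), fun x => ?_⟩
  exact tendsto_of_tendsto_of_tendsto_of_le_of_le (hc.mul_const _) (hM.mul_const _)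
    (fun n => (hq n).2.1 x) (fun n => (hq n).2.2 x)
end

/-- **Convergence of the value iteration and relative value iteration (main
discrete-time theorem):** if `(Λ, V)` solves the DP equation, then there is a
constant `c > 0` such that `J n x → c·V x` for `γ`-a.e. `x`, and
`V n x → (Λ / V x₀)·V x` for `γ`-a.e. `x`. -/
theorem vi_rvi_convergence
    {S U : Type*} [MetricSpace S] [CompactSpace S] [MeasurableSpace S] [BorelSpace S]
    [MetricSpace U] [CompactSpace U] [Nonempty U]
    (γ : Measure S) [IsFiniteMeasure γ]
    (hγ : ∀ O : Set S, IsOpen O → O.Nonempty → 0 < γ O)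
    (φ : S → U → S → ℝ)
    (hφc : Continuous fun q : S × U × S => φ q.1 q.2.1 q.2.2)
    (hφpos : ∀ x u y, 0 < φ x u y)
    (p : S → U → Measure S)
    (hp : ∀ x u, p x u = γ.withDensity fun y => ENNReal.ofReal (φ x u y))
    (hprob : ∀ x u, IsProbabilityMeasure (p x u))
    (k : S → U → ℝ) (hk : Continuous fun q : S × U => k q.1 q.2)
    (Λ : ℝ) (hΛ : 0 < Λ) (x₀ : S)
    (V : S → ℝ) (hVc : Continuous V) (hVpos : ∀ x, 0 < V x)
    (hDP : ∀ x : S, Λ * V x = ⨅ u : U, Real.exp (k x u) * ∫ y, V y ∂(p x u))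
    (J Vit : ℕ → S → ℝ)
    (hJ0c : Continuous (J 0)) (hJ0pos : ∀ x, 0 < J 0 x) (hJV0 : J 0 = Vit 0)
    (hJ : ∀ n x, J (n + 1) x = Λ⁻¹ * ⨅ u : U, Real.exp (k x u) * ∫ y, J n y ∂(p x u))
    (hVit : ∀ n x, Vit (n + 1) x
        = (Vit n x₀)⁻¹ * ⨅ u : U, Real.exp (k x u) * ∫ y, Vit n y ∂(p x u)) :
    ∃ c : ℝ, 0 < c ∧
      (∀ᵐ x ∂γ, Filter.Tendsto (fun n => J n x) Filter.atTop (nhds (c * V x))) ∧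
      ∀ᵐ x ∂γ, Filter.Tendsto (fun n => Vit n x) Filter.atTop
        (nhds ((Λ / V x₀) * V x)) := by
  have : Nonempty S := ⟨x₀⟩
  let a : S → U → S → ℝ := fun x u y => Real.exp (k x u) * φ x u y
  have ha : Continuous fun q : S × U × S => a q.1 q.2.1 q.2.2 := by
    have : Continuous fun q : S × U × S => k q.1 q.2.1 :=
      hk.comp (by fun_prop : Continuous fun q : S × U × S => (q.1, q.2.1))
    exact (Real.continuous_exp.comp this).mul hφc
  have hapos : ∀ x u y, 0 < a x u y := fun x u y => mul_pos (Real.exp_pos _) (hφpos x u y)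
  obtain ⟨z, -, hz⟩ := (isCompact_univ (X := S × U × S)).exists_isMinOn Set.univ_nonempty
    ha.continuousOn
  have hT : ∀ (f : S → ℝ) x, (⨅ u : U, Real.exp (k x u) * ∫ y, f y ∂(p x u)) = auxT γ a f x := by
    intro f x
    unfold auxT
    congr 1; ext u
    have hm : Measurable fun y => ENNReal.ofReal (φ x u y) :=
      ENNReal.measurable_ofReal.comp (aux_cont_y φ hφc x u).measurable
    rw [hp, integral_withDensity_eq_integral_toReal_smul hm
      (Filter.Eventually.of_forall fun y => ENNReal.ofReal_lt_top), ← integral_const_mul]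
    congr 1; ext y
    rw [ENNReal.toReal_ofReal (hφpos x u y).le, smul_eq_mul, mul_assoc]
  simp only [hT] at hDP hJ hVit
  have hVI : 0 < ∫ y, V y ∂γ := by
    rw [integral_pos_iff_support_of_nonneg (fun y => (hVpos y).le) (aux_integrable γ V hVc)]
    have : Function.support V = Set.univ := by
      ext y; simp [(hVpos y).ne']
    rw [this]
    exact hγ _ isOpen_univ Set.univ_nonempty
  obtain ⟨c, hc, hJpos, hlim⟩ := aux_conv γ a ha _ (hapos z.1 z.2.1 z.2.2)
    (fun x u y => hz (Set.mem_univ (x, u, y))) Λ hΛ x₀ V hVc hVpos hVI hDP J hJ0c hJ0pos hJ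
  refine ⟨c, hc, Filter.Eventually.of_forall hlim, Filter.Eventually.of_forall fun x => ?_⟩
  have key : ∀ n, ∃ b : ℝ, 0 < b ∧ Vit n = fun y => b * J n y := by
    intro n
    induction n with
    | zero => exact ⟨1, one_pos, by simp [hJV0]⟩
    | succ n ih =>
      obtain ⟨b, hb, he⟩ := ih
      refine ⟨Λ / J n x₀, div_pos hΛ (hJpos n x₀), ?_⟩
      ext y
      have := (hJpos n x₀).ne'
      rw [hVit, he, auxT_smul γ a b hb.le, hJ]
      field_simp
  have key2 : ∀ n, Vit (n + 1) x = Λ / J n x₀ * J (n + 1) x := by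
    intro n
    obtain ⟨b, hb, he⟩ := key n
    have := (hJpos n x₀).ne'
    rw [hVit, he, auxT_smul γ a b hb.le, hJ]
    field_simp
  rw [← tendsto_add_atTop_iff_nat 1]
  simp only [key2]
  have hne : c * V x₀ ≠ 0 := (mul_pos hc (hVpos x₀)).ne'
  have := ((tendsto_const_nhds (x := Λ)).div (hlim x₀) hne).mul
    ((tendsto_add_atTop_iff_nat 1).2 (hlim x))
  have hV0 := (hVpos x₀).ne'
  have e : Λ / V x₀ * V x = Λ / (c * V x₀) * (c * V x) := by field_simp
  rw [e]
  exact this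
end

section
/- Lyapunov drift inequality for the twisted operator: let a : ℝ^d → ℝ^{d×d} take values in symmetric matrices, let Act be a set, b : ℝ^d × Act → ℝ^d, c : ℝ^d × Act → ℝ, and for u ∈ Act let 𝓛_u be the elliptic operator with diffusion matrix a and drift b(·,u). Let Ψ : ℝ^d → (0,∞) and 𝒱 : ℝ^d → [1,∞) be twice differentiable, K ⊆ ℝ^d, and Ĉ ≥ 0, γ, λ* real constants. Assume that for all x ∈ ℝ^d and u ∈ Act: 𝓛_u Ψ(x) + c(x,u)Ψ(x) ≥ λ* Ψ(x), and 𝓛_u 𝒱(x) ≤ Ĉ·1_K(x) − γ·𝒱(x). Then, with ψ = log Ψ and 𝓛̃_u f = 𝓛_u f + ⟨a∇ψ, ∇f⟩, for all x ∈ ℝ^d and u ∈ Act: 𝓛̃_u(𝒱/Ψ)(x) ≤ ( Ĉ·1_K(x)/𝒱(x) − λ* + c(x,u) − γ ) · (𝒱(x)/Ψ(x)). -/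
open Filter Topology

/-- The elliptic operator `𝓛 f(x) = (1/2)·trace(a(x)·∇²f(x)) + ⟨b(x), ∇f(x)⟩`
with diffusion matrix `a` and drift `b`, acting on `f : ℝ^d → ℝ`. -/
noncomputable def ellOp {d : ℕ} (a : (Fin d → ℝ) → Matrix (Fin d) (Fin d) ℝ)
    (b : (Fin d → ℝ) → Fin d → ℝ) (f : (Fin d → ℝ) → ℝ) (x : Fin d → ℝ) : ℝ :=
  (1 / 2) * ∑ i, ∑ j, a x i j *
      fderiv ℝ (fun y => fderiv ℝ f y (Pi.single j (1 : ℝ))) x (Pi.single i 1)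
    + fderiv ℝ f x (b x)

/-- The gradient of `f : ℝ^d → ℝ` as a vector. -/
noncomputable def gradVec {d : ℕ} (f : (Fin d → ℝ) → ℝ) (x : Fin d → ℝ) :
    Fin d → ℝ :=
  fun i => fderiv ℝ f x (Pi.single i (1 : ℝ))

/-- The twisted operator `𝓛̃ f = 𝓛 f + ⟨a ∇ψ, ∇f⟩`. -/
noncomputable def twistedOp {d : ℕ} (a : (Fin d → ℝ) → Matrix (Fin d) (Fin d) ℝ)
    (b : (Fin d → ℝ) → Fin d → ℝ) (ψ : (Fin d → ℝ) → ℝ)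
    (f : (Fin d → ℝ) → ℝ) (x : Fin d → ℝ) : ℝ :=
  ellOp a b f x + fderiv ℝ f x ((a x).mulVec (gradVec ψ x))

/-- `f : ℝ^d → ℝ` is twice differentiable. -/
def TwiceDiff {d : ℕ} (f : (Fin d → ℝ) → ℝ) : Prop :=
  Differentiable ℝ f ∧ Differentiable ℝ (fderiv ℝ f)

theorem TwiceDiff.div_pos {d : ℕ} {V Ψ : (Fin d → ℝ) → ℝ} (hV : TwiceDiff V) (hΨ : TwiceDiff Ψ)
    (hpos : ∀ x, 0 < Ψ x) : TwiceDiff (fun y => V y / Ψ y) := by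
  obtain ⟨hV1, hV2⟩ := hV
  obtain ⟨hP1, hP2⟩ := hΨ
  have hne : ∀ x, Ψ x ≠ 0 := fun x => (hpos x).ne'
  have hi : Differentiable ℝ (fun y => (Ψ y)⁻¹) := fun y => (hP1 y).fun_inv (hne y)
  refine ⟨by simpa only [div_eq_mul_inv] using hV1.fun_mul hi, ?_⟩
  have hf : fderiv ℝ (fun y => V y / Ψ y) = fun y =>
      (Ψ y)⁻¹ • fderiv ℝ V y + (V y * (-((Ψ y)⁻¹ * (Ψ y)⁻¹))) • fderiv ℝ Ψ y := by
    funext y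
    have h1 : HasFDerivAt (fun y => (Ψ y)⁻¹) (-((Ψ y) ^ 2)⁻¹ • fderiv ℝ Ψ y) y :=
      (hasDerivAt_inv (hne y)).comp_hasFDerivAt y (hP1 y).hasFDerivAt
    have h2 := (hV1 y).hasFDerivAt.mul h1
    have h3 : (fun y => V y / Ψ y) = V * (fun y => (Ψ y)⁻¹) := by
      funext z; simp [div_eq_mul_inv]
    rw [h3, h2.fderiv]
    ext v
    simp
    ring
  rw [hf]
  exact (hi.fun_smul hV2).fun_add ((hV1.fun_mul (hi.fun_mul hi).fun_neg).fun_smul hP2)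

theorem TwiceDiff.partial_mul {d : ℕ} {g Ψ : (Fin d → ℝ) → ℝ} (hg : TwiceDiff g)
    (hΨ : TwiceDiff Ψ) (x v w : Fin d → ℝ) :
    fderiv ℝ (fun y => fderiv ℝ (fun z => g z * Ψ z) y v) x w =
      g x * fderiv ℝ (fun y => fderiv ℝ Ψ y v) x w + fderiv ℝ g x w * fderiv ℝ Ψ x v
      + (Ψ x * fderiv ℝ (fun y => fderiv ℝ g y v) x w + fderiv ℝ Ψ x w * fderiv ℝ g x v) := by
  obtain ⟨hg1, hg2⟩ := hg
  obtain ⟨hP1, hP2⟩ := hΨ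
  have h1 : (fun y => fderiv ℝ (fun z => g z * Ψ z) y v) =
      fun y => g y * fderiv ℝ Ψ y v + Ψ y * fderiv ℝ g y v := by
    funext y
    rw [fderiv_fun_mul (hg1 y) (hP1 y)]
    simp
  have hgv : Differentiable ℝ (fun y => fderiv ℝ g y v) := by fun_prop
  have hPv : Differentiable ℝ (fun y => fderiv ℝ Ψ y v) := by fun_prop
  rw [h1, fderiv_fun_add ((hg1 x).fun_mul (hPv x)) ((hP1 x).fun_mul (hgv x)),
    fderiv_fun_mul (hg1 x) (hPv x), fderiv_fun_mul (hP1 x) (hgv x)]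
  simp
  ring

theorem fderiv_mulVec {d : ℕ} (L : (Fin d → ℝ) →L[ℝ] ℝ) (A : Matrix (Fin d) (Fin d) ℝ)
    (p : Fin d → ℝ) :
    L (A.mulVec p) = ∑ i, ∑ j, A i j * (L (Pi.single i 1) * p j) := by
  conv_lhs => rw [pi_eq_sum_univ' (A.mulVec p)]
  rw [map_sum]
  refine Finset.sum_congr rfl fun i _ => ?_
  have : (fun j => if i = j then (1:ℝ) else 0) = Pi.single i 1 := by
    funext j; simp [Pi.single_apply, eq_comm]
  simp only [map_smul, smul_eq_mul, Matrix.mulVec, dotProduct, Finset.sum_mul]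
  refine Finset.sum_congr rfl fun j _ => ?_
  try rw [this]
  ring

theorem ellOp_mul {d : ℕ} (a : (Fin d → ℝ) → Matrix (Fin d) (Fin d) ℝ)
    (hsymm : ∀ x, (a x).IsSymm) (b : (Fin d → ℝ) → Fin d → ℝ)
    {g Ψ : (Fin d → ℝ) → ℝ} (hg : TwiceDiff g) (hΨ : TwiceDiff Ψ) (x : Fin d → ℝ) :
    ellOp a b (fun z => g z * Ψ z) x =
      g x * ellOp a b Ψ x + Ψ x * ellOp a b g x
        + fderiv ℝ g x ((a x).mulVec (gradVec Ψ x)) := by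
  rw [fderiv_mulVec]
  have hs : ∑ i, ∑ j, a x i j * (fderiv ℝ Ψ x (Pi.single i 1) * fderiv ℝ g x (Pi.single j 1))
      = ∑ i, ∑ j, a x i j * (fderiv ℝ g x (Pi.single i 1) * fderiv ℝ Ψ x (Pi.single j 1)) := by
    rw [Finset.sum_comm]
    refine Finset.sum_congr rfl fun i _ => Finset.sum_congr rfl fun j _ => ?_
    rw [(hsymm x).apply]
    ring
  have hm : ∑ i, ∑ j, a x i j *
      fderiv ℝ (fun y => fderiv ℝ (fun z => g z * Ψ z) y (Pi.single j (1 : ℝ))) x (Pi.single i 1)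
      = g x * ∑ i, ∑ j, a x i j *
          fderiv ℝ (fun y => fderiv ℝ Ψ y (Pi.single j (1 : ℝ))) x (Pi.single i 1)
        + Ψ x * ∑ i, ∑ j, a x i j *
          fderiv ℝ (fun y => fderiv ℝ g y (Pi.single j (1 : ℝ))) x (Pi.single i 1)
        + ∑ i, ∑ j, a x i j * (fderiv ℝ g x (Pi.single i 1) * fderiv ℝ Ψ x (Pi.single j 1))
        + ∑ i, ∑ j, a x i j *
            (fderiv ℝ Ψ x (Pi.single i 1) * fderiv ℝ g x (Pi.single j 1)) := by
    simp only [Finset.mul_sum, ← Finset.sum_add_distrib]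
    refine Finset.sum_congr rfl fun i _ => Finset.sum_congr rfl fun j _ => ?_
    rw [hg.partial_mul hΨ]
    ring
  have hd : fderiv ℝ (fun z => g z * Ψ z) x (b x)
      = g x * fderiv ℝ Ψ x (b x) + Ψ x * fderiv ℝ g x (b x) := by
    rw [fderiv_fun_mul (hg.1 x) (hΨ.1 x)]
    simp
  unfold ellOp
  rw [hm, hs, hd]
  simp only [gradVec]
  ring

/-- **Lyapunov drift inequality for the twisted operator:** if
`𝓛_u Ψ + c(·,u)Ψ ≥ λ* Ψ` and `𝓛_u 𝒱 ≤ Ĉ·1_K − γ·𝒱` for all controls `u`,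
then with `ψ = log Ψ`,
`𝓛̃_u(𝒱/Ψ)(x) ≤ (Ĉ·1_K(x)/𝒱(x) − λ* + c(x,u) − γ)·(𝒱(x)/Ψ(x))`. -/
theorem twisted_lyapunov_drift {d : ℕ} {Act : Type*}
    (a : (Fin d → ℝ) → Matrix (Fin d) (Fin d) ℝ)
    (hsymm : ∀ x, (a x).IsSymm)
    (b : (Fin d → ℝ) → Act → Fin d → ℝ)
    (c : (Fin d → ℝ) → Act → ℝ)
    (Ψ V : (Fin d → ℝ) → ℝ)
    (hΨ : TwiceDiff Ψ) (hV : TwiceDiff V)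
    (hΨpos : ∀ x, 0 < Ψ x) (hVone : ∀ x, 1 ≤ V x)
    (K : Set (Fin d → ℝ)) (Chat γ lamstar : ℝ) (hChat : 0 ≤ Chat)
    (heigen : ∀ (x : Fin d → ℝ) (u : Act),
      lamstar * Ψ x ≤ ellOp a (fun y => b y u) Ψ x + c x u * Ψ x)
    (hdrift : ∀ (x : Fin d → ℝ) (u : Act),
      ellOp a (fun y => b y u) V x ≤ K.indicator (fun _ => Chat) x - γ * V x) :
    ∀ (x : Fin d → ℝ) (u : Act),
      twistedOp a (fun y => b y u) (fun y => Real.log (Ψ y))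
          (fun y => V y / Ψ y) x
        ≤ (K.indicator (fun _ => Chat) x / V x - lamstar + c x u - γ)
            * (V x / Ψ x) := by
  intro x u
  have hg := hV.div_pos hΨ hΨpos
  have hP := hΨpos x
  have hv : 0 < V x := lt_of_lt_of_le one_pos (hVone x)
  have hVeq : (fun z => V z / Ψ z * Ψ z) = V := by
    funext z
    exact div_mul_cancel₀ _ (hΨpos z).ne'
  have key := ellOp_mul a hsymm (fun y => b y u) hg hΨ x
  rw [hVeq] at key
  have hgrad : gradVec (fun y => Real.log (Ψ y)) x = (Ψ x)⁻¹ • gradVec Ψ x := by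
    funext i
    simp only [gradVec, Pi.smul_apply]
    rw [fderiv.log (hΨ.1 x) hP.ne']
    rfl
  unfold twistedOp
  rw [hgrad, Matrix.mulVec_smul, map_smul, smul_eq_mul]
  have h1 := heigen x u
  have h2 := hdrift x u
  set G := ellOp a (fun y => b y u) (fun y => V y / Ψ y) x
  set T := fderiv ℝ (fun y => V y / Ψ y) x ((a x).mulVec (gradVec Ψ x))
  set LP := ellOp a (fun y => b y u) Ψ x
  set LV := ellOp a (fun y => b y u) V x
  set I := K.indicator (fun _ => Chat) x
  have e1 : G + (Ψ x)⁻¹ * T = (LV - V x / Ψ x * LP) / Ψ x := by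
    rw [key]
    field_simp
    ring
  have e2 : (I / V x - lamstar + c x u - γ) * (V x / Ψ x)
      = (I - γ * V x - V x / Ψ x * (lamstar * Ψ x - c x u * Ψ x)) / Ψ x := by
    field_simp
    ring
  rw [e1, e2]
  have h3 : V x / Ψ x * (lamstar * Ψ x - c x u * Ψ x) ≤ V x / Ψ x * LP :=
    mul_le_mul_of_nonneg_left (by linarith) (div_pos hv hP).le
  exact div_le_div_of_nonneg_right (by linarith) hP.le
end

section
/- The relative value iteration PDE transforms into the value iteration PDE: let Act be a compact topological space, a : ℝ^d → ℝ^{d×d} continuous with symmetric values, b : ℝ^d × Act → ℝ^d and c : ℝ^d × Act → ℝ continuous, and λ* ∈ ℝ. Let Φ : [0,∞) × ℝ^d → (0,∞) be continuous, continuously differentiable in t and twice continuously differentiable in x on (0,∞) × ℝ^d, and satisfy the RVI equation ∂_t Φ(t,x) = inf_{u∈Act} [ 𝓛_u Φ(t,·)(x) + c(x,u)Φ(t,x) ] − Φ(t,0)·Φ(t,x) for all t > 0, x ∈ ℝ^d. Define Φ̄(t,x) := Φ(t,x) · exp( ∫_0^t (Φ(s,0) − λ*) ds ). Then Φ̄(0,·)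 = Φ(0,·) and Φ̄ satisfies the VI equation ∂_t Φ̄(t,x) = inf_{u∈Act} [ 𝓛_u Φ̄(t,·)(x) + c(x,u)Φ̄(t,x) ] − λ*·Φ̄(t,x) for all t > 0, x ∈ ℝ^d. -/
open Filter Topology intervalIntegral

theorem ellOp_const_mul {d : ℕ} (a : (Fin d → ℝ) → Matrix (Fin d) (Fin d) ℝ)
    (b : (Fin d → ℝ) → Fin d → ℝ) (f : (Fin d → ℝ) → ℝ) (x : Fin d → ℝ)
    (hf : ContDiff ℝ 2 f) (k : ℝ) :
    ellOp a b (fun y => k * f y) x = k * ellOp a b f x := by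
  have hd : Differentiable ℝ f := hf.differentiable (by norm_num)
  have h1 : ∀ y v, fderiv ℝ (fun y => k * f y) y v = k * fderiv ℝ f y v := by
    intro y v
    rw [fderiv_const_mul (hd y)]
    rfl
  have hd2 : Differentiable ℝ (fderiv ℝ f) :=
    (hf.fderiv_right (m := 1) (by norm_num)).differentiable (by norm_num)
  have h2 : ∀ w v, fderiv ℝ (fun y => k * fderiv ℝ f y w) x v
      = k * fderiv ℝ (fun y => fderiv ℝ f y w) x v := by
    intro w v
    have : DifferentiableAt ℝ (fun y => fderiv ℝ f y w) x := (hd2 x).clm_apply (by fun_prop)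
    rw [fderiv_const_mul this]
    rfl
  unfold ellOp
  simp only [h1, h2]
  simp only [mul_add, Finset.mul_sum]
  congr 1
  refine Finset.sum_congr rfl fun i _ => Finset.sum_congr rfl fun j _ => ?_
  ring

/-- **The relative value iteration PDE transforms into the value iteration PDE:**
if `Φ` solves the RVI equation
`∂ₜΦ = inf_u [𝓛_u Φ + c(·,u)Φ] − Φ(t,0)Φ` on `(0,∞) × ℝ^d`, then
`Φ̄(t,x) := Φ(t,x)·exp(∫₀ᵗ (Φ(s,0) − λ*) ds)` satisfies `Φ̄(0,·) = Φ(0,·)` and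
solves the VI equation `∂ₜΦ̄ = inf_u [𝓛_u Φ̄ + c(·,u)Φ̄] − λ*·Φ̄`. -/
theorem rvi_pde_transforms_to_vi_pde {d : ℕ} {Act : Type*}
    [TopologicalSpace Act] [CompactSpace Act] [Nonempty Act]
    (a : (Fin d → ℝ) → Matrix (Fin d) (Fin d) ℝ)
    (hac : Continuous a) (hsymm : ∀ x, (a x).IsSymm)
    (b : (Fin d → ℝ) → Act → Fin d → ℝ)
    (hbc : Continuous fun q : (Fin d → ℝ) × Act => b q.1 q.2)
    (c : (Fin d → ℝ) → Act → ℝ)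
    (hcc : Continuous fun q : (Fin d → ℝ) × Act => c q.1 q.2)
    (lamstar : ℝ)
    (Φ : ℝ → (Fin d → ℝ) → ℝ)
    (hΦcont : ContinuousOn (fun q : ℝ × (Fin d → ℝ) => Φ q.1 q.2)
      {q : ℝ × (Fin d → ℝ) | 0 ≤ q.1})
    (hΦpos : ∀ t, 0 ≤ t → ∀ x, 0 < Φ t x)
    (hΦt : ∀ x, ∀ t ∈ Set.Ioi (0 : ℝ), DifferentiableAt ℝ (fun s => Φ s x) t)
    (hΦtc : ∀ x, ContinuousOn (fun t => deriv (fun s => Φ s x) t) (Set.Ioi (0 : ℝ)))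
    (hΦx : ∀ t ∈ Set.Ioi (0 : ℝ), ContDiff ℝ 2 (Φ t))
    (hRVI : ∀ t ∈ Set.Ioi (0 : ℝ), ∀ x : Fin d → ℝ,
      deriv (fun s => Φ s x) t
        = (⨅ u : Act, ellOp a (fun y => b y u) (Φ t) x + c x u * Φ t x)
          - Φ t 0 * Φ t x)
    (Φbar : ℝ → (Fin d → ℝ) → ℝ)
    (hΦbar : ∀ t x, Φbar t x
      = Φ t x * Real.exp (∫ s in (0 : ℝ)..t, (Φ s 0 - lamstar))) :
    (∀ x : Fin d → ℝ, Φbar 0 x = Φ 0 x) ∧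
    ∀ t ∈ Set.Ioi (0 : ℝ), ∀ x : Fin d → ℝ,
      deriv (fun s => Φbar s x) t
        = (⨅ u : Act, ellOp a (fun y => b y u) (Φbar t) x + c x u * Φbar t x)
          - lamstar * Φbar t x := by
  refine ⟨fun x => by simp [hΦbar], ?_⟩
  intro t ht x
  have ht' : (0 : ℝ) < t := ht
  have hg : ContinuousOn (fun s => Φ s 0 - lamstar) (Set.Ici 0) := by
    refine ContinuousOn.sub ?_ continuousOn_const
    exact hΦcont.comp (f := fun s : ℝ => (s, (0 : Fin d → ℝ))) (by fun_prop) (fun s hs => hs)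
  have hI : HasDerivAt (fun r => ∫ s in (0 : ℝ)..r, (Φ s 0 - lamstar)) (Φ t 0 - lamstar) t := by
    apply intervalIntegral.integral_hasDerivAt_right
    · apply ContinuousOn.intervalIntegrable
      apply hg.mono
      rw [Set.uIcc_of_le ht'.le]
      exact fun s hs => hs.1
    · exact (hg.mono Set.Ioi_subset_Ici_self).stronglyMeasurableAtFilter isOpen_Ioi t ht
    · exact hg.continuousAt (Ici_mem_nhds ht')
  have hD := ((hΦt x t ht).hasDerivAt.mul hI.exp).deriv
  have e1 : (fun s => Φbar s x)
      = (fun s => Φ s x) * fun r => Real.exp (∫ s in (0 : ℝ)..r, (Φ s 0 - lamstar)) := by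
    funext s
    exact hΦbar s x
  rw [e1, hD, hRVI t ht x]
  set E := Real.exp (∫ s in (0 : ℝ)..t, (Φ s 0 - lamstar)) with hE
  have e2 : Φbar t = fun y => E * Φ t y := by
    funext y
    rw [hΦbar, mul_comm]
  have e3 : (⨅ u : Act, ellOp a (fun y => b y u) (Φbar t) x + c x u * Φbar t x)
      = E * ⨅ u : Act, ellOp a (fun y => b y u) (Φ t) x + c x u * Φ t x := by
    rw [Real.mul_iInf_of_nonneg (Real.exp_pos _).le]
    congr 1
    funext u
    rw [e2, ellOp_const_mul a _ _ x (hΦx t ht)]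
    ring
  rw [e3, e2]
  ring
end

section
/- Convergence of the relative value iteration from convergence of the value iteration at the reference point: let λ* > 0, let Φ : [0,∞) × ℝ^d → (0,∞) be such that t ↦ Φ(t,0) is continuous, and define Φ̄(t,x) := Φ(t,x) · exp( ∫_0^t (Φ(s,0) − λ*) ds ). If Φ̄(t,0) → C as t → ∞ for some constant C > 0, then: (i) for every x ∈ ℝ^d, Φ(t,x)/Φ̄(t,x) → λ*/C as t → ∞; (ii) ∫_0^t (Φ(s,0) − λ*) ds converges to the finite constant log(C/λ*) as t → ∞; and (iii) Φ(t,0) → λ* as t → ∞. -/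
open Filter Topology intervalIntegral

lemma rvi_aux (l : ℝ) (hl : 0 < l) (u h : ℝ → ℝ)
    (hu : ∀ t, 0 < t → HasDerivAt u (h t - l * u t) t)
    (hh : Tendsto h atTop (𝓝 0)) (e : ℝ) (he : 0 < e) : ∀ᶠ t in atTop, u t < 2 * e := by
  have h1 : ∀ᶠ t in atTop, h t < l * e := hh.eventually_lt_const (by positivity)
  obtain ⟨T, hT⟩ := eventually_atTop.1 (h1.and (eventually_gt_atTop 0))
  have hT0 : 0 < T := (hT T le_rfl).2
  have hd : ∀ t, T ≤ t → HasDerivAt (fun t => (u t - e) * Real.exp (l * t))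
      ((h t - l * e) * Real.exp (l * t)) t := by
    intro t ht
    have a := (hu t (by linarith)).sub_const e
    have b := ((hasDerivAt_id t).const_mul l).exp
    refine (a.mul b).congr_deriv ?_
    simp
    ring
  have hanti : AntitoneOn (fun t => (u t - e) * Real.exp (l * t)) (Set.Ici T) := by
    apply antitoneOn_of_deriv_nonpos (convex_Ici T)
    · exact fun t ht => (hd t ht).continuousAt.continuousWithinAt
    · intro t ht
      rw [interior_Ici] at ht
      exact (hd t (le_of_lt ht)).differentiableAt.differentiableWithinAt
    · intro t ht
      rw [interior_Ici] at ht
      have ht' : T ≤ t := le_of_lt ht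
      rw [(hd t ht').deriv]
      exact mul_nonpos_of_nonpos_of_nonneg (by linarith [(hT t ht').1]) (Real.exp_pos _).le
  have hlt : Tendsto (fun t : ℝ => Real.exp (l * t)) atTop atTop :=
    Real.tendsto_exp_atTop.comp (tendsto_id.const_mul_atTop hl)
  filter_upwards [eventually_ge_atTop T,
    (hlt.const_mul_atTop he).eventually_gt_atTop ((u T - e) * Real.exp (l * T))] with t ht h2
  have h3 := hanti (Set.mem_Ici.2 le_rfl) (Set.mem_Ici.2 ht) ht
  simp only at h3
  have h4 : (u t - e) * Real.exp (l * t) < e * Real.exp (l * t) := lt_of_le_of_lt h3 h2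
  have := lt_of_mul_lt_mul_right h4 (Real.exp_pos _).le
  linarith

lemma rvi_aux2 (l : ℝ) (hl : 0 < l) (C : ℝ) (u g : ℝ → ℝ)
    (hu : ∀ t, 0 < t → HasDerivAt u (g t - l * u t) t)
    (hg : Tendsto g atTop (𝓝 C)) : Tendsto u atTop (𝓝 (C / l)) := by
  have hC : l * (C / l) = C := by field_simp
  have hg0 : Tendsto (fun t => g t - C) atTop (𝓝 0) := by simpa using hg.sub_const C
  have hg1 : Tendsto (fun t => C - g t) atTop (𝓝 0) := by simpa using hg.const_sub C
  rw [Metric.tendsto_nhds]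
  intro e he
  have a := rvi_aux l hl (fun t => u t - C / l) (fun t => g t - C)
    (fun t ht => ((hu t ht).sub_const _).congr_deriv (by linear_combination -hC)) hg0 (e / 2)
    (by positivity)
  have b := rvi_aux l hl (fun t => C / l - u t) (fun t => C - g t)
    (fun t ht => ((hu t ht).const_sub _).congr_deriv (by linear_combination hC)) hg1 (e / 2)
    (by positivity)
  filter_upwards [a, b] with t h1 h2
  rw [Real.dist_eq, abs_lt]
  constructor <;> linarith

/-- **Convergence of the relative value iteration from convergence of the value
iteration at the reference point:** with
`Φ̄(t,x) := Φ(t,x)·exp(∫₀ᵗ (Φ(s,0) − λ*) ds)` and `λ* > 0`, if `Φ̄(t,0) → C > 0`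
as `t → ∞`, then (i) `Φ(t,x)/Φ̄(t,x) → λ*/C` for every `x`;
(ii) `∫₀ᵗ (Φ(s,0) − λ*) ds → log(C/λ*)`; and (iii) `Φ(t,0) → λ*`. -/
theorem rvi_convergence_from_vi_convergence {d : ℕ}
    (lamstar : ℝ) (hlam : 0 < lamstar)
    (Φ : ℝ → (Fin d → ℝ) → ℝ)
    (hΦpos : ∀ t, 0 ≤ t → ∀ x, 0 < Φ t x)
    (hΦ0cont : ContinuousOn (fun t => Φ t 0) (Set.Ici (0 : ℝ)))
    (Φbar : ℝ → (Fin d → ℝ) → ℝ)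
    (hΦbar : ∀ t x, Φbar t x
      = Φ t x * Real.exp (∫ s in (0 : ℝ)..t, (Φ s 0 - lamstar)))
    (C : ℝ) (hC : 0 < C)
    (hconv : Tendsto (fun t => Φbar t 0) atTop (nhds C)) :
    (∀ x : Fin d → ℝ,
      Tendsto (fun t => Φ t x / Φbar t x) atTop (nhds (lamstar / C))) ∧
    Tendsto (fun t => ∫ s in (0 : ℝ)..t, (Φ s 0 - lamstar)) atTop
      (nhds (Real.log (C / lamstar))) ∧
    Tendsto (fun t => Φ t 0) atTop (nhds lamstar) := by
  have hI : ∀ t, 0 < t → HasDerivAt (fun t => ∫ s in (0 : ℝ)..t, (Φ s 0 - lamstar))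
      (Φ t 0 - lamstar) t := by
    intro t ht
    have hc : ContinuousOn (fun s => Φ s 0 - lamstar) (Set.Ici (0 : ℝ)) :=
      hΦ0cont.sub continuousOn_const
    apply intervalIntegral.integral_hasDerivAt_right
    · apply ContinuousOn.intervalIntegrable
      apply hc.mono
      rw [Set.uIcc_of_le ht.le]
      exact Set.Icc_subset_Ici_self
    · exact (hc.mono Set.Ioi_subset_Ici_self).stronglyMeasurableAtFilter isOpen_Ioi t ht
    · exact hc.continuousAt (Ici_mem_nhds ht)
  have hE : Tendsto (fun t => Real.exp (∫ s in (0 : ℝ)..t, (Φ s 0 - lamstar))) atTop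
      (𝓝 (C / lamstar)) := by
    refine rvi_aux2 lamstar hlam C _ (fun t => Φbar t 0) (fun t ht => ?_) hconv
    refine (hI t ht).exp.congr_deriv ?_
    rw [hΦbar]
    ring
  have hCl : C / lamstar ≠ 0 := by positivity
  refine ⟨fun x => ?_, ?_, ?_⟩
  · have h := hE.inv₀ hCl
    rw [inv_div] at h
    refine h.congr' ?_
    filter_upwards [eventually_ge_atTop 0] with t ht
    have := (hΦpos t ht x).ne'
    rw [hΦbar]
    field_simp
  · simpa using hE.log hCl
  · have h := hconv.div hE hCl
    have h2 : C / (C / lamstar) = lamstar := by field_simp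
    rw [h2] at h
    refine h.congr fun t => ?_
    simp only [Pi.div_apply, hΦbar]
    field_simp
end
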